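/- arXiv:1605.06051 — 6 statements merged into one kernel-verified Lean document; each statement's English description precedes it below -/
import Mathlib

section
/- Let X be a nonempty Polish space and B ⊆ X a Borel set which is not meager. Let E be an equivalence relation on B such that E, viewed as a subset of X × X, has the Baire property. If every E-equivalence class is a meager subset of X, then there is a perfect set P ⊆ B whose elements are pairwise E-inequivalent. -/
/-!
A nonmeager Borel set `B` is comeager in some nonempty open set `U`. The section form of the
Kuratowski–Ulam theorem (`residual_sections`), applied to the symmetric difference of `E` and an
open set, shows that `E` is meager in `X × X` (`isMeagre_of_sections`). Hence so is
`N = E ∪ ((U \ B) × X)`.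

The perfect set is the range of a generic continuous map `f` from Cantor space to `X`, for a
complete metric on `X`. For a dense open `W ⊆ X × X` and a coordinate `k`, the maps `f` with
`(f x, f y) ∈ W` whenever `x k ≠ y k` form an open set (compactness) which is dense: approximate
`f` by a map that depends on finitely many coordinates only, and move its finitely many values
into general position with respect to `W` (`exists_finite_general_position`). By the Baire
category theorem in `C(ℕ → Bool, X)`, some `f` with values in `U` satisfies `(f x, f y) ∉ N` for
all `x ≠ y`. Then `f x ∈ B` and `(f x, f y) ∉ E`; as `E` is reflexive on `B`, `f` is injective,
so its range is perfect.
-/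

open MeasureTheory Set

/-- `E` is an equivalence relation on the set `B`, viewed as a set of pairs. -/
def IsEquivOn {X : Type*} (B : Set X) (E : Set (X × X)) : Prop :=
  E ⊆ B ×ˢ B ∧ (∀ x ∈ B, (x, x) ∈ E) ∧ (∀ x y, (x, y) ∈ E → (y, x) ∈ E) ∧
    ∀ x y z, (x, y) ∈ E → (y, z) ∈ E → (x, z) ∈ E

/-- A set has the Baire property if it differs from an open set by a meager set. -/
def HasBaireProp {Y : Type*} [TopologicalSpace Y] (s : Set Y) : Prop :=
  ∃ U : Set Y, IsOpen U ∧ IsMeagre (symmDiff s U)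

/-- The Kuratowski–Ulam theorem for comeager sets: almost all sections are comeager. -/
lemma residual_sections {X Y : Type*} [TopologicalSpace X] [TopologicalSpace Y]
    [SecondCountableTopology Y] {R : Set (X × Y)} (hR : R ∈ residual (X × Y)) :
    ∀ᶠ x in residual X, {y | (x, y) ∈ R} ∈ residual Y := by
  obtain ⟨S, hSo, hSd, hSc, hSR⟩ := mem_residual_iff.1 hR
  have key : ∀ W ∈ S, ∀ᶠ x in residual X, {y | (x, y) ∈ W} ∈ residual Y := by
    intro W hW
    have hV : ∀ V ∈ TopologicalSpace.countableBasis Y,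
        ∀ᶠ x in residual X, ∃ y ∈ V, (x, y) ∈ W := by
      intro V hV
      have hVo := TopologicalSpace.isOpen_of_mem_countableBasis hV
      have hVn := TopologicalSpace.nonempty_of_mem_countableBasis hV
      have heq : {x | ∃ y ∈ V, (x, y) ∈ W} = Prod.fst '' (W ∩ Prod.snd ⁻¹' V) := by
        ext x
        simp [and_comm]
      have ho : IsOpen {x | ∃ y ∈ V, (x, y) ∈ W} := by
        rw [heq]
        exact isOpenMap_fst _ ((hSo W hW).inter (hVo.preimage continuous_snd))
      refine residual_of_dense_open ho ?_
      rw [dense_iff_inter_open]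
      intro O hO hOn
      obtain ⟨⟨x, y⟩, ⟨hx, hy⟩, hxy⟩ :=
        (hSd W hW).inter_open_nonempty (O ×ˢ V) (hO.prod hVo) (hOn.prod hVn)
      exact ⟨x, hx, y, hy, hxy⟩
    have hall := (eventually_countable_ball
      (TopologicalSpace.countable_countableBasis Y)).2 hV
    filter_upwards [hall] with x hx
    refine residual_of_dense_open ((hSo W hW).preimage (by fun_prop)) ?_
    refine (TopologicalSpace.isBasis_countableBasis Y).dense_iff.2 ?_
    intro V hV _
    obtain ⟨y, hy, hxy⟩ := hx V hV
    exact ⟨y, hy, hxy⟩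
  filter_upwards [(eventually_countable_ball hSc).2 key] with x hx
  have := (countable_bInter_mem hSc).2 hx
  refine Filter.mem_of_superset this ?_
  intro y hy
  refine hSR ?_
  simpa using hy

/-- A set with the Baire property all of whose vertical sections are meager is meager. -/
lemma isMeagre_of_sections {X Y : Type*} [TopologicalSpace X] [BaireSpace X]
    [TopologicalSpace Y] [BaireSpace Y] [SecondCountableTopology Y] {E : Set (X × Y)}
    (hE : HasBaireProp E) (hs : ∀ x, IsMeagre {y | (x, y) ∈ E}) : IsMeagre E := by
  obtain ⟨O, hO, hM⟩ := hE
  have hOe : O = ∅ := by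
    by_contra hne
    obtain ⟨⟨a, b⟩, hab⟩ := Set.nonempty_iff_ne_empty.2 hne
    have hd := dense_of_mem_residual (residual_sections hM)
    obtain ⟨x, ⟨⟨x', y⟩, hxy, rfl⟩, hx⟩ :=
      hd.inter_open_nonempty _ (isOpenMap_fst _ hO) ⟨a, _, hab, rfl⟩
    have hOx : IsOpen {z | (x', z) ∈ O} := hO.preimage (by fun_prop)
    refine not_isMeagre_of_isOpen hOx ⟨y, hxy⟩ ?_
    have hx' : IsMeagre {z | (x', z) ∈ symmDiff E O} := hx
    refine ((hs x').union hx').mono ?_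
    intro z hz
    by_cases hzE : (x', z) ∈ E
    · exact Or.inl hzE
    · exact Or.inr (Or.inr ⟨hz, hzE⟩)
  subst hOe
  simpa [symmDiff_def] using hM

/-- Given a dense open relation `W`, the points of a finite family can be moved within given
open sets so that every two of them with distinct indices are `W`-related. -/
lemma exists_finite_general_position {X I : Type*} [TopologicalSpace X] [Finite I]
    [BaireSpace (I → X)] {W : Set (X × X)} (hWo : IsOpen W) (hWd : Dense W)
    (V : I → Set X) (hVo : ∀ i, IsOpen (V i)) (hVn : ∀ i, (V i).Nonempty) :
    ∃ p : I → X, (∀ i, p i ∈ V i) ∧ ∀ i j, i ≠ j → (p i, p j) ∈ W := by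
  classical
  have hd : ∀ᶠ p : I → X in residual _, ∀ i j, i ≠ j → (p i, p j) ∈ W := by
    refine eventually_countable_forall.2 fun i => eventually_countable_forall.2 fun j => ?_
    by_cases hij : i = j
    · exact Filter.Eventually.of_forall fun p h => absurd hij h
    have hmem : {p : I → X | (p i, p j) ∈ W} ∈ residual (I → X) := by
      refine residual_of_dense_open (hWo.preimage (by fun_prop)) ?_
      rw [dense_iff_inter_open]
      rintro O hO ⟨p, hp⟩
      -- Moving the coordinates `i` and `j` of `p` is continuous in the two new values.
      let u : X × X → I → X := fun z => Function.update (Function.update p i z.1) j z.2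
      have hu : Continuous u :=
        ((continuous_const (y := p)).update i continuous_fst).update j continuous_snd
      have hup : u (p i, p j) = p := by simp [u]
      obtain ⟨z, hz, hzW⟩ := hWd.inter_open_nonempty _ (hO.preimage hu)
        ⟨(p i, p j), by simpa [hup] using hp⟩
      refine ⟨u z, hz, ?_⟩
      simpa [u, Function.update_of_ne hij] using hzW
    filter_upwards [hmem] with p hp _ using hp
  obtain ⟨p, hpV, hp⟩ := (dense_of_mem_residual hd).inter_open_nonempty
    (Set.univ.pi V) (isOpen_set_pi Set.finite_univ fun i _ => hVo i)
    (Set.univ_pi_nonempty_iff.2 hVn)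
  exact ⟨p, fun i => hpV i trivial, hp⟩

/-- A continuous map on Cantor space is, up to `ε`, determined by finitely many coordinates. -/
lemma exists_cylinder_modulus {X : Type*} [PseudoMetricSpace X] (f : C(ℕ → Bool, X)) {ε : ℝ}
    (hε : 0 < ε) : ∃ m : ℕ, ∀ x y : ℕ → Bool, (∀ i < m, x i = y i) → dist (f x) (f y) < ε := by
  let : MetricSpace (ℕ → Bool) := PiNat.metricSpaceOfDiscreteUniformity fun _ => rfl
  have hu := CompactSpace.uniformContinuous_of_continuous f.continuous
  obtain ⟨δ, hδ, h⟩ := Metric.uniformContinuous_iff.1 hu ε hε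
  obtain ⟨m, hm⟩ := exists_pow_lt_of_lt_one hδ (by norm_num : (1 / 2 : ℝ) < 1)
  refine ⟨m, fun x y hxy => h (lt_of_le_of_lt ?_ hm)⟩
  exact PiNat.mem_cylinder_iff_dist_le.1 fun i hi => hxy i hi

/-- For a dense open relation `W`, the generic continuous map from Cantor space sends pairs
differing at the coordinate `k` into `W`. -/
lemma residual_maps_into {X : Type*} [MetricSpace X] [CompleteSpace X] {W : Set (X × X)}
    (hWo : IsOpen W) (hWd : Dense W) (k : ℕ) :
    ∀ᶠ f : C(ℕ → Bool, X) in residual _, ∀ x y, x k ≠ y k → (f x, f y) ∈ W := by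
  refine residual_of_dense_open ?_ ?_
  · have hK : IsCompact {z : (ℕ → Bool) × (ℕ → Bool) | z.1 k ≠ z.2 k} := by
      refine IsClosed.isCompact ?_
      have : Continuous fun z : (ℕ → Bool) × (ℕ → Bool) => (z.1 k, z.2 k) := by fun_prop
      exact (isClosed_discrete {b : Bool × Bool | b.1 ≠ b.2}).preimage this
    have hc : Continuous fun f : C(ℕ → Bool, X) => f.prodMap f := by
      refine ContinuousMap.continuous_of_continuous_uncurry _ ?_
      change Continuous fun q : C(ℕ → Bool, X) × ((ℕ → Bool) × (ℕ → Bool)) =>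
        (q.1 q.2.1, q.1 q.2.2)
      fun_prop
    convert (ContinuousMap.isOpen_setOfPred_mapsTo hK hWo).preimage hc using 1
    ext f
    simp [Set.MapsTo]
  · rw [Metric.dense_iff]
    intro f r hr
    obtain ⟨m, hm⟩ := exists_cylinder_modulus f (half_pos hr)
    -- Enlarging the modulus beyond `k` lets the coordinate `k` be read off the restriction.
    let n := max m (k + 1)
    let ext : (Fin n → Bool) → ℕ → Bool := fun s i => if h : i < n then s ⟨i, h⟩ else false
    let res : (ℕ → Bool) → Fin n → Bool := fun x i => x i
    obtain ⟨p, hp, hpW⟩ := exists_finite_general_position (I := Fin n → Bool) hWo hWd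
      (fun s => Metric.ball (f (ext s)) (r / 2)) (fun _ => Metric.isOpen_ball)
      (fun _ => Metric.nonempty_ball.2 (half_pos hr))
    have hg : Continuous fun x => p (res x) :=
      (continuous_of_discreteTopology (f := p)).comp (by fun_prop)
    refine ⟨⟨_, hg⟩, ?_, ?_⟩
    · rw [Metric.mem_ball, ContinuousMap.dist_lt_iff hr]
      intro x
      have h1 : dist (p (res x)) (f (ext (res x))) < r / 2 := hp (res x)
      have h2 : dist (f (ext (res x))) (f x) < r / 2 := by
        refine hm _ _ fun i hi => ?_
        have : i < n := lt_of_lt_of_le hi (le_max_left _ _)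
        simp [ext, res, this]
      have h3 := dist_triangle (p (res x)) (f (ext (res x))) (f x)
      change dist (p (res x)) (f x) < r
      linarith
    · intro x y hxy
      refine hpW _ _ fun h => hxy ?_
      exact congrFun h ⟨k, lt_of_lt_of_le (Nat.lt_succ_self k) (le_max_right _ _)⟩

/-- Mycielski's theorem for meager relations: some continuous image of Cantor space in `U` has
distinct points unrelated by the meager relation `N`. -/
lemma exists_map_avoiding {X : Type*} [MetricSpace X] [CompleteSpace X] {N : Set (X × X)}
    (hN : IsMeagre N) {U : Set X} (hU : IsOpen U) (hUn : U.Nonempty) :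
    ∃ f : C(ℕ → Bool, X), (∀ x, f x ∈ U) ∧ ∀ x y, x ≠ y → (f x, f y) ∉ N := by
  obtain ⟨S, hSo, hSd, hSc, hSN⟩ := mem_residual_iff.1 hN
  have hgen : ∀ᶠ f : C(ℕ → Bool, X) in residual _,
      ∀ W ∈ S, ∀ k x y, x k ≠ y k → (f x, f y) ∈ W :=
    (eventually_countable_ball hSc).2 fun W hW =>
      eventually_countable_forall.2 fun k => residual_maps_into (hSo W hW) (hSd W hW) k
  obtain ⟨a, ha⟩ := hUn
  obtain ⟨f, hfU, hf⟩ := (dense_of_mem_residual hgen).inter_open_nonempty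
    {f : C(ℕ → Bool, X) | Set.MapsTo f Set.univ U}
    (ContinuousMap.isOpen_setOfPred_mapsTo isCompact_univ hU)
    ⟨ContinuousMap.const _ a, fun _ _ => ha⟩
  refine ⟨f, fun x => hfU trivial, fun x y hxy => ?_⟩
  obtain ⟨k, hk⟩ := Function.ne_iff.1 hxy
  exact hSN (Set.mem_sInter.2 fun W hW => hf W hW k x y hk)

/-- A nonmeager Borel set is comeager in some nonempty open set. -/
lemma exists_open_diff_isMeagre {X : Type*} [TopologicalSpace X] [MeasurableSpace X]
    [BorelSpace X] {B : Set X} (hB : MeasurableSet B) (hBn : ¬ IsMeagre B) :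
    ∃ U : Set X, IsOpen U ∧ U.Nonempty ∧ IsMeagre (U \ B) := by
  obtain ⟨U, hU, hBU⟩ := hB.baireMeasurableSet.residualEq_isOpen
  have hmem : {x | x ∈ B ↔ x ∈ U} ∈ residual X := by
    filter_upwards [hBU] with x hx using iff_of_eq hx
  refine ⟨U, hU, ?_, ?_⟩
  · rw [Set.nonempty_iff_ne_empty]
    rintro rfl
    exact hBn (Filter.mem_of_superset hmem fun x hx => by simpa using hx)
  · refine Filter.mem_of_superset hmem fun x hx => ?_
    rintro ⟨h1, h2⟩
    exact h2 (hx.2 h1)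

/-- An injective continuous image of Cantor space is perfect. -/
lemma perfect_range_cantor {X : Type*} [TopologicalSpace X] [T2Space X] (f : C(ℕ → Bool, X))
    (hf : Function.Injective f) : Perfect (Set.range f) := by
  refine ⟨(isCompact_range f.continuous).isClosed, ?_⟩
  rintro _ ⟨x, rfl⟩
  rw [accPt_iff_nhds]
  intro V hV
  -- The points obtained from `x` by flipping the coordinate `n` converge to `x`.
  let y : ℕ → ℕ → Bool := fun n => Function.update x n (!x n)
  have hy : Filter.Tendsto y Filter.atTop (nhds x) := by
    rw [tendsto_pi_nhds]
    intro i
    refine tendsto_const_nhds.congr' ?_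
    filter_upwards [Filter.eventually_gt_atTop i] with n hn
    simp [y, Function.update_of_ne hn.ne]
  obtain ⟨n, hn⟩ := (((f.continuous.tendsto x).comp hy).eventually hV).exists
  refine ⟨f (y n), ⟨hn, y n, rfl⟩, fun h => ?_⟩
  have := congrFun (hf h) n
  simp [y] at this

theorem mycielski_meager {X : Type*} [TopologicalSpace X] [PolishSpace X] [Nonempty X]
    [MeasurableSpace X] [BorelSpace X]
    (B : Set X) (hBborel : MeasurableSet B) (hBnonmeager : ¬ IsMeagre B)
    (E : Set (X × X)) (hE : IsEquivOn B E) (hEbp : HasBaireProp E)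
    (hclasses : ∀ x ∈ B, IsMeagre {y | (x, y) ∈ E}) :
    ∃ P : Set X, P ⊆ B ∧ Perfect P ∧ P.Nonempty ∧
      ∀ x ∈ P, ∀ y ∈ P, x ≠ y → (x, y) ∉ E := by
  let := TopologicalSpace.upgradeIsCompletelyMetrizable X
  obtain ⟨hEB, hrefl, -, -⟩ := hE
  obtain ⟨U, hU, hUn, hUB⟩ := exists_open_diff_isMeagre hBborel hBnonmeager
  have hEm : IsMeagre E := by
    refine isMeagre_of_sections hEbp fun x => ?_
    by_cases hx : x ∈ B
    · exact hclasses x hx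
    · exact IsMeagre.empty.mono fun y hy => hx (hEB hy).1
  have hN : IsMeagre (E ∪ Prod.fst ⁻¹' (U \ B)) :=
    hEm.union (hUB.preimage_of_isOpenMap continuous_fst isOpenMap_fst)
  obtain ⟨f, hfU, hf⟩ := exists_map_avoiding hN hU hUn
  have hfB : ∀ x, f x ∈ B := by
    intro x
    by_contra hx
    obtain ⟨y, hy⟩ := exists_ne x
    exact hf x y hy.symm (Or.inr ⟨hfU x, hx⟩)
  have hfE : ∀ x y, x ≠ y → (f x, f y) ∉ E := fun x y hxy h => hf x y hxy (Or.inl h)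
  have hinj : Function.Injective f := by
    intro x y hxy
    by_contra hne
    exact hfE x y hne (hxy ▸ hrefl _ (hfB x))
  refine ⟨Set.range f, ?_, perfect_range_cantor f hinj, Set.range_nonempty f, ?_⟩
  · rintro _ ⟨x, rfl⟩
    exact hfB x
  · rintro _ ⟨x, rfl⟩ _ ⟨y, rfl⟩ hxy
    exact hfE x y fun h => hxy (h ▸ rfl)
end

section
/- Let B ⊆ ℝ be a Borel set of positive Lebesgue measure and let E be an equivalence relation on B which, viewed as a subset of ℝ × ℝ, is Lebesgue measurable (with respect to two-dimensional Lebesgue measure). If every E-equivalence class is Lebesgue null, then there is a perfect set P ⊆ B whose elements are pairwise E-inequivalent. -/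
/-!
Integrating over sections, Fubini's theorem shows that `E` is a null subset of the plane, since its
classes are null (`relation_null`). It then suffices to find a perfect subset of `B` whose pairs of
distinct points all avoid `E`; only reflexivity of `E` is needed besides nullity.

Shrink `B` to a compact set `K` of positive measure. Up to a null set, `K ×ˢ K \ E` is a countable
union of closed sets `C n`. By the Lebesgue density theorem, `K` and the `C n` have conull subsets
`A` and `D n` consisting of their own density points (`exists_density_core`).

Build, level by level, points `x s ∈ A` indexed by binary words, such that two distinct words `s`, `t`
of equal length satisfy `(x s, x t) ∈ D m`, where `m` depends only on the words cut off just after the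
first place where they differ. To pass to the next level, choose the children of every
`x s` independently and uniformly in a ball of small radius around `x s` (`step`): by density, pairs
with different parents remain in their `D m` with probability close to `1`, whereas siblings lie in
`A` with probability close to `1` and then almost surely form a pair in some `D m`. Along branches
the points converge uniformly, giving a continuous map `f` on Cantor space (`exists_map`). For
`α ≠ β` the approximations of `(f α, f β)` eventually lie in a single `D m`, so the limit lies in
the closed set `C m`, hence outside `E`. Thus `f` is injective and its range is the perfect set.
-/

open MeasureTheory Set

open Filter Topology ProbabilityTheory

/-! ### Density cores -/

/-- The uniform probability measure on the closed ball of centre `x` and radius `r` (for `r > 0`). -/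
noncomputable def unif {X : Type*} [MetricSpace X] [MeasureSpace X] (x : X) (r : ℝ) : Measure X :=
  cond volume (Metric.closedBall x r)

lemma unif_prob (x : ℝ) {r : ℝ} (hr : 0 < r) : IsProbabilityMeasure (unif x r) := by
  apply cond_isProbabilityMeasure_of_finite
  · exact (Metric.measure_closedBall_pos volume x hr).ne'
  · exact measure_closedBall_lt_top.ne

lemma unif_ac {X : Type*} [MetricSpace X] [MeasureSpace X] (x : X) (r : ℝ) :
    unif x r ≪ volume := cond_absolutelyContinuous

lemma unif_prod (x y : ℝ) {r : ℝ} (hr : 0 < r) :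
    (unif x r).prod (unif y r) = unif (x, y) r := by
  have hx : volume (Metric.closedBall x r) ≠ 0 := (Metric.measure_closedBall_pos volume x hr).ne'
  have hx' : volume (Metric.closedBall x r) ≠ ⊤ := measure_closedBall_lt_top.ne
  unfold unif ProbabilityTheory.cond
  rw [Measure.prod_smul_left, Measure.prod_smul_right, Measure.prod_restrict, smul_smul,
    closedBall_prod_same, ← ENNReal.mul_inv (Or.inl hx) (Or.inl hx'), ← Measure.prod_prod,
    closedBall_prod_same]
  rfl

/-- By the Lebesgue density theorem, a measurable set agrees up to a null set with a subset `D` all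
of whose points are density points of `D` itself. -/
lemma exists_density_core {X : Type*} [MetricSpace X] [MeasureSpace X] [BorelSpace X]
    [SecondCountableTopology X] [HasBesicovitchCovering X]
    [IsLocallyFiniteMeasure (volume : Measure X)] [(volume : Measure X).IsOpenPosMeasure]
    [ProperSpace X]
    {C : Set X} (hC : MeasurableSet C) :
    ∃ D ⊆ C, volume (C \ D) = 0 ∧
      ∀ p ∈ D, Tendsto (fun r => unif p r Dᶜ) (𝓝[>] 0) (𝓝 0) := by
  set T : Set X := {x | Tendsto (fun r => volume (C ∩ Metric.closedBall x r) /
    volume (Metric.closedBall x r)) (𝓝[>] 0) (𝓝 1)} with hT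
  have h := (ae_restrict_iff' hC).1 (Besicovitch.ae_tendsto_measure_inter_div volume C)
  have hnull : volume (C \ (C ∩ T)) = 0 := by
    refine measure_mono_null ?_ (ae_iff.1 h)
    intro x hx hx'
    exact hx.2 ⟨hx.1, hx' hx.1⟩
  refine ⟨C ∩ T, inter_subset_left, hnull, fun p hp => ?_⟩
  have h1 : Tendsto (fun r => 1 - volume (C ∩ Metric.closedBall p r) /
      volume (Metric.closedBall p r)) (𝓝[>] 0) (𝓝 (1 - 1)) :=
    ENNReal.Tendsto.sub tendsto_const_nhds hp.2 (Or.inl ENNReal.one_ne_top)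
  rw [tsub_self] at h1
  refine tendsto_of_tendsto_of_tendsto_of_le_of_le' tendsto_const_nhds h1
    (Eventually.of_forall fun _ => zero_le) ?_
  filter_upwards [self_mem_nhdsWithin] with r hr
  have hr : 0 < r := hr
  have : IsProbabilityMeasure (unif p r) := by
    apply cond_isProbabilityMeasure_of_finite
    · exact (Metric.measure_closedBall_pos volume p hr).ne'
    · exact measure_closedBall_lt_top.ne
  calc unif p r (C ∩ T)ᶜ ≤ unif p r (Cᶜ ∪ C \ (C ∩ T)) := by
        apply measure_mono
        intro x hx
        by_cases hxC : x ∈ C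
        · exact Or.inr ⟨hxC, hx⟩
        · exact Or.inl hxC
    _ ≤ unif p r Cᶜ + unif p r (C \ (C ∩ T)) := measure_union_le _ _
    _ = 1 - unif p r C := by rw [unif_ac p r hnull, add_zero, prob_compl_eq_one_sub hC]
    _ = _ := by
        congr 1
        rw [unif, cond_apply Metric.isClosed_closedBall.measurableSet, inter_comm,
          ENNReal.div_eq_inv_mul]

/-! ### Independent choices in small balls -/

lemma map_pair_pi {κ : Type*} [Fintype κ] (μ : κ → Measure ℝ)
    [∀ s, IsProbabilityMeasure (μ s)] {s t : κ} (hst : s ≠ t) :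
    (Measure.pi μ).map (fun y => (y s, y t)) = (μ s).prod (μ t) := by
  have h := (iIndepFun_pi (μ := μ) (X := fun _ => id) (fun _ => aemeasurable_id)).indepFun hst
  have h2 := (indepFun_iff_map_prod_eq_prod_map_map (measurable_pi_apply s).aemeasurable
    (measurable_pi_apply t).aemeasurable).1 h
  have e : ∀ i, (Measure.pi μ).map (fun y => y i) = μ i :=
    fun i => (measurePreserving_eval μ i).map_eq
  rw [e, e] at h2
  exact h2

/-- The inductive step. Each point `x i` is replaced by finitely many nearby points `y s`, `π s = i`:
pairs coming from different points stay in the set `D k` to which the original pair belonged, and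
pairs coming from the same point enter some `D k`. Independent uniform choices in small balls around
the `x i` succeed with probability tending to `1`. -/
lemma step {ι κ : Type*} [Fintype κ] (π : κ → ι) {A : Set ℝ} {D : ℕ → Set (ℝ × ℝ)}
    (hA : ∀ a ∈ A, Tendsto (fun r => unif a r Aᶜ) (𝓝[>] 0) (𝓝 0))
    (hD : ∀ k, ∀ p ∈ D k, Tendsto (fun r => unif p r (D k)ᶜ) (𝓝[>] 0) (𝓝 0))
    (hAD : volume (A ×ˢ A \ ⋃ k, D k) = 0)
    (x : ι → ℝ) (k : ι → ι → ℕ) (hx : ∀ i, x i ∈ A)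
    (hk : ∀ i j, i ≠ j → (x i, x j) ∈ D (k i j)) {ε : ℝ} (hε : 0 < ε) :
    ∃ (y : κ → ℝ) (l : κ → κ → ℕ), (∀ s, y s ∈ A) ∧ (∀ s t, s ≠ t → (y s, y t) ∈ D (l s t)) ∧
      (∀ s, dist (x (π s)) (y s) ≤ ε) ∧ ∀ s t, π s ≠ π t → l s t = k (π s) (π t) := by
  classical
  let P : ℝ → Measure (κ → ℝ) := fun r => Measure.pi fun s => unif (x (π s)) r
  -- the three kinds of bad events have probability tending to zero
  have b1 : ∀ s, Tendsto (fun r => P r {y | y s ∉ A}) (𝓝[>] 0) (𝓝 0) := by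
    intro s
    refine tendsto_of_tendsto_of_tendsto_of_le_of_le' tendsto_const_nhds (hA _ (hx (π s)))
      (Eventually.of_forall fun _ => zero_le) ?_
    filter_upwards [self_mem_nhdsWithin] with r hr
    have := fun s => unif_prob (x (π s)) hr
    have h := Measure.le_map_apply (μ := P r) (f := fun y => y s)
      (measurable_pi_apply s).aemeasurable Aᶜ
    rwa [(measurePreserving_eval (fun s => unif (x (π s)) r) s).map_eq] at h
  have b2 : ∀ s, Tendsto (fun r => P r {y | ¬ dist (x (π s)) (y s) ≤ ε}) (𝓝[>] 0) (𝓝 0) := by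
    intro s
    refine tendsto_const_nhds.congr' ?_
    filter_upwards [self_mem_nhdsWithin, mem_nhdsWithin_of_mem_nhds (Iio_mem_nhds hε)] with r hr hr'
    have := fun s => unif_prob (x (π s)) hr
    have h := Measure.le_map_apply (μ := P r) (f := fun y => y s)
      (measurable_pi_apply s).aemeasurable
      {z | ¬ dist (x (π s)) z ≤ ε}
    rw [(measurePreserving_eval (fun s => unif (x (π s)) r) s).map_eq] at h
    refine (le_antisymm (h.trans ?_) (zero_le)).symm
    rw [unif, cond_apply Metric.isClosed_closedBall.measurableSet]
    have : Metric.closedBall (x (π s)) r ∩ {z | ¬ dist (x (π s)) z ≤ ε} = ∅ := by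
      ext z
      simp only [mem_inter_iff, Metric.mem_closedBall, mem_ofPred_eq, mem_empty_iff_false, iff_false,
        not_and, not_not]
      intro hz
      rw [dist_comm]
      exact hz.trans (le_of_lt hr')
    rw [this, measure_empty, mul_zero]
  have b3 : ∀ s t, π s ≠ π t →
      Tendsto (fun r => P r {y | (y s, y t) ∉ D (k (π s) (π t))}) (𝓝[>] 0) (𝓝 0) := by
    intro s t hst
    refine tendsto_of_tendsto_of_tendsto_of_le_of_le' tendsto_const_nhds (hD _ _ (hk _ _ hst))
      (Eventually.of_forall fun _ => zero_le) ?_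
    filter_upwards [self_mem_nhdsWithin] with r hr
    have := fun s => unif_prob (x (π s)) hr
    have h := Measure.le_map_apply (μ := P r) (f := fun y => (y s, y t))
      ((measurable_pi_apply s).prodMk (measurable_pi_apply t)).aemeasurable
      (D (k (π s) (π t)))ᶜ
    rwa [map_pair_pi _ (fun e => hst (congrArg π e)), unif_prod _ _ hr] at h
  have b4 : ∀ s t, s ≠ t →
      Tendsto (fun r => P r {y | (y s, y t) ∈ A ×ˢ A \ ⋃ k, D k}) (𝓝[>] 0) (𝓝 0) := by
    intro s t hst
    refine tendsto_const_nhds.congr' ?_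
    filter_upwards [self_mem_nhdsWithin] with r hr
    have := fun s => unif_prob (x (π s)) hr
    have h := Measure.le_map_apply (μ := P r) (f := fun y => (y s, y t))
      ((measurable_pi_apply s).prodMk (measurable_pi_apply t)).aemeasurable
      (A ×ˢ A \ ⋃ k, D k)
    rw [map_pair_pi _ hst, unif_prod _ _ hr, unif_ac _ _ hAD] at h
    exact (le_antisymm h (zero_le)).symm
  let bad : κ × κ → Set (κ → ℝ) := fun q =>
    ({y | y q.1 ∉ A} ∪ {y | ¬ dist (x (π q.1)) (y q.1) ≤ ε}) ∪
    ((if π q.1 ≠ π q.2 then {y | (y q.1, y q.2) ∉ D (k (π q.1) (π q.2))} else ∅) ∪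
     (if q.1 ≠ q.2 then {y | (y q.1, y q.2) ∈ A ×ˢ A \ ⋃ k, D k} else ∅))
  have union : ∀ S T : Set (κ → ℝ), Tendsto (fun r => P r S) (𝓝[>] 0) (𝓝 0) →
      Tendsto (fun r => P r T) (𝓝[>] 0) (𝓝 0) →
      Tendsto (fun r => P r (S ∪ T)) (𝓝[>] 0) (𝓝 0) := by
    intro S T hS hT
    have h := hS.add hT
    rw [add_zero] at h
    exact tendsto_of_tendsto_of_tendsto_of_le_of_le tendsto_const_nhds h
      (fun _ => zero_le) (fun _ => measure_union_le _ _)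
  have hbad : ∀ q, Tendsto (fun r => P r (bad q)) (𝓝[>] 0) (𝓝 0) := by
    intro q
    refine union _ _ (union _ _ (b1 _) (b2 _)) (union _ _ ?_ ?_)
    · split_ifs with h
      · exact b3 _ _ h
      · simp
    · split_ifs with h
      · exact b4 _ _ h
      · simp
  have hall : Tendsto (fun r => P r (⋃ q, bad q)) (𝓝[>] 0) (𝓝 0) := by
    have h := tendsto_finsetSum Finset.univ (fun q _ => hbad q)
    rw [Finset.sum_const_zero] at h
    exact tendsto_of_tendsto_of_tendsto_of_le_of_le tendsto_const_nhds h
      (fun _ => zero_le) (fun _ => measure_iUnion_fintype_le _ _)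
  obtain ⟨r, hr1, hr⟩ := ((hall.eventually_lt_const one_pos).and self_mem_nhdsWithin).exists
  have := fun s => unif_prob (x (π s)) hr
  have hne : (⋃ q, bad q) ≠ univ := by
    intro h
    rw [h, measure_univ] at hr1
    exact lt_irrefl _ hr1
  obtain ⟨y, hy⟩ := (ne_univ_iff_exists_notMem _).1 hne
  simp only [mem_iUnion, not_exists] at hy
  have g1 : ∀ s, y s ∈ A := fun s => by
    by_contra h
    exact hy (s, s) (Or.inl (Or.inl h))
  have g2 : ∀ s, dist (x (π s)) (y s) ≤ ε := fun s => by
    by_contra h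
    exact hy (s, s) (Or.inl (Or.inr h))
  have g3 : ∀ s t, π s ≠ π t → (y s, y t) ∈ D (k (π s) (π t)) := fun s t hst => by
    by_contra h
    refine hy (s, t) (Or.inr (Or.inl ?_))
    rw [if_pos hst]
    exact h
  have g4 : ∀ s t, s ≠ t → ∃ m, (y s, y t) ∈ D m := fun s t hst => by
    by_contra h
    refine hy (s, t) (Or.inr (Or.inr ?_))
    rw [if_pos hst]
    exact ⟨⟨g1 s, g1 t⟩, by simpa using h⟩
  have g5 : ∀ s t, ∃ m, (s ≠ t → (y s, y t) ∈ D m) ∧ (π s ≠ π t → m = k (π s) (π t)) := by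
    intro s t
    by_cases h : π s = π t
    · by_cases h' : s = t
      · exact ⟨0, fun e => absurd h' e, fun e => absurd h e⟩
      · obtain ⟨m, hm⟩ := g4 s t h'
        exact ⟨m, fun _ => hm, fun e => absurd h e⟩
    · exact ⟨_, fun _ => g3 s t h, fun _ => rfl⟩
  choose l hl using g5
  exact ⟨y, l, g1, fun s t => (hl s t).1, g2, fun s t => (hl s t).2⟩

/-! ### The perfect set -/

/-- A finite stage of the construction: points of `A` indexed by binary words of length `n`, each
pair of distinct ones lying in the set `D m` whose index `m` is recorded by the second component. -/
def Stage (A : Set ℝ) (D : ℕ → Set (ℝ × ℝ)) (n : ℕ) : Type :=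
  {p : ((Fin n → Bool) → ℝ) × ((Fin n → Bool) → (Fin n → Bool) → ℕ) //
    (∀ s, p.1 s ∈ A) ∧ ∀ s t, s ≠ t → (p.1 s, p.1 t) ∈ D (p.2 s t)}

/-- The restriction of an infinite binary sequence to its first `n` terms. -/
def initSeg (n : ℕ) (α : ℕ → Bool) : Fin n → Bool := fun i => α i

/-- A Cantor scheme: a continuous map on Cantor space such that each pair of distinct points is sent
into the closure of one of the sets `D m`. -/
lemma exists_map {A : Set ℝ} {D : ℕ → Set (ℝ × ℝ)} (hne : A.Nonempty)
    (hA : ∀ a ∈ A, Tendsto (fun r => unif a r Aᶜ) (𝓝[>] 0) (𝓝 0))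
    (hD : ∀ k, ∀ p ∈ D k, Tendsto (fun r => unif p r (D k)ᶜ) (𝓝[>] 0) (𝓝 0))
    (hAD : volume (A ×ˢ A \ ⋃ k, D k) = 0) :
    ∃ f : (ℕ → Bool) → ℝ, Continuous f ∧ ∀ α β, α ≠ β → ∃ m, (f α, f β) ∈ closure (D m) := by
  have hstep : ∀ n (p : Stage A D n), ∃ q : Stage A D (n + 1),
      (∀ s, dist (p.1.1 (Fin.init s)) (q.1.1 s) ≤ 1 * (1 / 2) ^ n) ∧
      ∀ s t, Fin.init s ≠ (Fin.init t : Fin n → Bool) →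
        q.1.2 s t = p.1.2 (Fin.init s) (Fin.init t) := by
    rintro n ⟨⟨x, k⟩, hx, hk⟩
    obtain ⟨y, l, h1, h2, h3, h4⟩ := step (κ := Fin (n + 1) → Bool)
      (fun s => (Fin.init s : Fin n → Bool)) hA hD hAD x k hx hk
      (ε := 1 * (1 / 2) ^ n) (by positivity)
    exact ⟨⟨⟨y, l⟩, h1, h2⟩, h3, h4⟩
  choose next hnext1 hnext2 using hstep
  obtain ⟨a, ha⟩ := hne
  let S : ∀ n, Stage A D n := fun n => Nat.rec
    ⟨⟨fun _ => a, fun _ _ => 0⟩, fun _ => ha, fun s t h => absurd (Subsingleton.elim s t) h⟩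
    (fun n p => next n p) n
  let F : ℕ → (ℕ → Bool) → ℝ := fun n α => (S n).1.1 (initSeg n α)
  have hF : ∀ α n, dist (F n α) (F (n + 1) α) ≤ 1 * (1 / 2) ^ n := fun α n =>
    hnext1 n (S n) (initSeg (n + 1) α)
  have hcauchy : ∀ α, CauchySeq (fun n => F n α) := fun α =>
    cauchySeq_of_le_geometric (1 / 2) 1 (by norm_num) (hF α)
  choose f hf using fun α => cauchySeq_tendsto_of_complete (hcauchy α)
  refine ⟨f, ?_, ?_⟩
  · have hu : TendstoUniformly F f atTop := by
      rw [Metric.tendstoUniformly_iff]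
      intro ε hε
      have hlim : Tendsto (fun n : ℕ => 1 * (1 / 2 : ℝ) ^ n / (1 - 1 / 2)) atTop (𝓝 0) := by
        have h := ((tendsto_pow_atTop_nhds_zero_of_lt_one (r := (1 / 2 : ℝ)) (by norm_num)
          (by norm_num)).const_mul 1).div_const (1 - 1 / 2)
        simpa using h
      filter_upwards [hlim.eventually_lt_const hε] with n hn α
      rw [dist_comm]
      exact (dist_le_of_le_geometric_of_tendsto (1 / 2) 1 (by norm_num) (hF α) (hf α) n).trans_lt hn
    refine hu.continuous (Eventually.of_forall fun n => ?_).frequently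
    have : Continuous (initSeg n) := continuous_pi fun i => continuous_apply _
    exact continuous_of_discreteTopology.comp this
  · intro α β hαβ
    obtain ⟨i, hi⟩ := Function.ne_iff.1 hαβ
    have hsep : ∀ n, i + 1 ≤ n → initSeg n α ≠ initSeg n β := fun n hn h =>
      hi (congrFun h ⟨i, hn⟩)
    refine ⟨(S (i + 1)).1.2 (initSeg _ α) (initSeg _ β), ?_⟩
    have hconst : ∀ n, i + 1 ≤ n → (S n).1.2 (initSeg n α) (initSeg n β) =
        (S (i + 1)).1.2 (initSeg _ α) (initSeg _ β) := by
      intro n hn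
      induction n, hn using Nat.le_induction with
      | base => rfl
      | succ n hn ih =>
        rw [← ih]
        exact hnext2 n (S n) (initSeg (n + 1) α) (initSeg (n + 1) β) (hsep n hn)
    refine mem_closure_of_tendsto ((hf α).prodMk_nhds (hf β)) ?_
    filter_upwards [eventually_ge_atTop (i + 1)] with n hn
    rw [← hconst n hn]
    exact (S n).2.2 _ _ (hsep n hn)

lemma perfect_range {f : (ℕ → Bool) → ℝ} (hf : Continuous f) (hinj : Function.Injective f) :
    Perfect (range f) := by
  refine ⟨(isCompact_range hf).isClosed, ?_⟩
  rintro _ ⟨α, rfl⟩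
  rw [accPt_iff_nhds]
  intro U hU
  -- flipping the `n`-th digit gives points of Cantor space, distinct from `α`, that converge to `α`
  have hlim : Tendsto (fun n => Function.update α n (!α n)) atTop (𝓝 α) := by
    rw [tendsto_pi_nhds]
    intro i
    refine tendsto_const_nhds.congr' ?_
    filter_upwards [eventually_gt_atTop i] with n hn
    rw [Function.update_of_ne hn.ne]
  obtain ⟨n, hn⟩ := (((hf.tendsto α).comp hlim).eventually hU).exists
  refine ⟨_, ⟨hn, mem_range_self _⟩, fun h => ?_⟩
  have := congrFun (hinj h) n
  simp at this

/-! ### Null relations -/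

/-- A measurable relation with null classes is null, by Fubini's theorem. -/
lemma relation_null {B : Set ℝ} {E : Set (ℝ × ℝ)} (hE : E ⊆ B ×ˢ B)
    (hEmeas : NullMeasurableSet E (volume : Measure (ℝ × ℝ)))
    (hclasses : ∀ x ∈ B, volume {y | (x, y) ∈ E} = 0) : volume E = 0 := by
  obtain ⟨M, -, hM, hME⟩ := hEmeas.exists_measurable_superset_ae_eq
  rw [← measure_congr hME]
  have h0 : (volume : Measure (ℝ × ℝ)) = (volume : Measure ℝ).prod volume := rfl
  rw [h0] at hME ⊢
  apply Measure.measure_prod_null_of_ae_null hM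
  filter_upwards [Measure.ae_ae_of_ae_prod hME] with x hx
  have h1 : volume (Prod.mk x ⁻¹' E) = 0 := by
    by_cases hxB : x ∈ B
    · exact hclasses x hxB
    · rw [show Prod.mk x ⁻¹' E = ∅ from ?_, measure_empty]
      ext y
      simp only [mem_preimage, mem_empty_iff_false, iff_false]
      exact fun h => hxB (hE h).1
  exact (measure_congr (s := Prod.mk x ⁻¹' M) hx).trans h1

/-- A measurable set of finite measure is, up to a null set, a countable union of closed sets. -/
lemma exists_closed_cover {H : Set (ℝ × ℝ)} (hH : MeasurableSet H) (hfin : volume H ≠ ⊤) :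
    ∃ C : ℕ → Set (ℝ × ℝ), (∀ n, C n ⊆ H) ∧ (∀ n, IsClosed (C n)) ∧
      volume (H \ ⋃ n, C n) = 0 := by
  have h : ∀ n : ℕ, ∃ C ⊆ H, IsClosed C ∧ volume (H \ C) < ((n : ENNReal) + 1)⁻¹ := fun n =>
    hH.exists_isClosed_sdiff_lt hfin (by simp)
  choose C h1 h2 h3 using h
  refine ⟨C, h1, h2, ?_⟩
  by_contra hne
  obtain ⟨n, hn⟩ := ENNReal.exists_inv_nat_lt hne
  have h4 : volume (H \ ⋃ n, C n) ≤ volume (H \ C n) :=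
    measure_mono (sdiff_subset_sdiff_right (subset_iUnion C n))
  have h5 : ((n : ENNReal) + 1)⁻¹ ≤ (n : ENNReal)⁻¹ := ENNReal.inv_le_inv.2 le_self_add
  exact absurd (hn.trans_le (h4.trans ((h3 n).le.trans h5))) (lt_irrefl _)

theorem mycielski_null
    (B : Set ℝ) (hBborel : MeasurableSet B) (hBpos : 0 < volume B)
    (E : Set (ℝ × ℝ)) (hE : IsEquivOn B E)
    (hEmeas : NullMeasurableSet E (volume : Measure (ℝ × ℝ)))
    (hclasses : ∀ x ∈ B, volume {y | (x, y) ∈ E} = 0) :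
    ∃ P : Set ℝ, P ⊆ B ∧ Perfect P ∧ P.Nonempty ∧
      ∀ x ∈ P, ∀ y ∈ P, x ≠ y → (x, y) ∉ E := by
  have hE0 : volume E = 0 := relation_null hE.1 hEmeas hclasses
  obtain ⟨K, hKB, hK, hKpos⟩ := hBborel.exists_lt_isCompact hBpos
  obtain ⟨A, hAK, hKA, hA⟩ := exists_density_core hK.measurableSet
  have hAne : A.Nonempty := by
    rw [nonempty_iff_ne_empty]
    rintro rfl
    simp only [sdiff_empty] at hKA
    exact hKpos.ne' hKA
  set N := toMeasurable volume E
  have hN : volume N = 0 := (measure_toMeasurable E).trans hE0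
  obtain ⟨C, hCH, hC, hC0⟩ := exists_closed_cover (H := K ×ˢ K \ N)
    ((hK.measurableSet.prod hK.measurableSet).diff (measurableSet_toMeasurable _ _))
    ((measure_mono sdiff_subset).trans_lt (hK.prod hK).measure_lt_top).ne
  choose D hDC hCD hD using fun n => exists_density_core (hC n).measurableSet
  have hAD : volume (A ×ˢ A \ ⋃ n, D n) = 0 := by
    refine measure_mono_null (t := N ∪ ((K ×ˢ K \ N) \ ⋃ n, C n) ∪ ⋃ n, C n \ D n) ?_
      (measure_union_null (measure_union_null hN hC0) (measure_iUnion_null hCD))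
    rintro p ⟨hp, hpD⟩
    by_cases hpN : p ∈ N
    · exact Or.inl (Or.inl hpN)
    by_cases hpC : p ∈ ⋃ n, C n
    · obtain ⟨n, hn⟩ := mem_iUnion.1 hpC
      exact Or.inr (mem_iUnion.2 ⟨n, hn, fun h => hpD (mem_iUnion.2 ⟨n, h⟩)⟩)
    · exact Or.inl (Or.inr ⟨⟨⟨hAK hp.1, hAK hp.2⟩, hpN⟩, hpC⟩)
  obtain ⟨f, hf, hpair⟩ := exists_map hAne hA hD hAD
  have hgood : ∀ α β, α ≠ β → (f α, f β) ∈ K ×ˢ K \ N := by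
    intro α β h
    obtain ⟨m, hm⟩ := hpair α β h
    exact hCH m (closure_minimal (hDC m) (hC m) hm)
  have hfB : ∀ α, f α ∈ B := by
    intro α
    obtain ⟨β, hβ⟩ := exists_ne α
    exact hKB (hgood α β hβ.symm).1.1
  have hinE : ∀ α β, α ≠ β → (f α, f β) ∉ E := fun α β h h' =>
    (hgood α β h).2 (subset_toMeasurable _ _ h')
  -- injectivity: equal values would be related, by reflexivity of `E` on `B`
  have hinj : Function.Injective f := by
    intro α β h
    by_contra hne
    apply hinE α β hne
    rw [← h]
    exact hE.2.1 _ (hfB α)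
  refine ⟨range f, range_subset_iff.2 hfB, perfect_range hf hinj, range_nonempty f, ?_⟩
  rintro _ ⟨α, rfl⟩ _ ⟨β, rfl⟩ h
  exact hinE α β fun e => h (congrArg f e)
end

section
/- (Silver) Let X be a Polish space and let E be an equivalence relation on X which, as a subset of X × X, is coanalytic. Then either X is the union of countably many E-equivalence classes, or there is a perfect set P ⊆ X whose elements are pairwise E-inequivalent. -/
/-!
The proof follows B. Miller's classical (forcing-free) approach to dichotomy theorems.

Suppose that `X` is not a countable union of `E`-classes, and let `f : (ℕ → ℕ) → X × X` be a
continuous map with range `Eᶜ`. A set of finite approximations to a map `(ℕ → Bool) → X` is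
*large* if no countable union of `E`-classes meets the range of each of its members. Large sets are
stable under gluing of pairwise inequivalent approximations (`large_amalgam`) and under passing to
some piece of a countable partition (`Large.exists_fiber`). A fusion of large sets of shrinking
diameter produces a continuous `φ : (ℕ → Bool) → X` sending any two points that differ in exactly
one coordinate to inequivalent points (`exists_continuous_flip_inequiv`); the inequivalence
survives the passage to the limit because the `f`-witnesses of it converge as well.

The pullback `A` of `Eᶜ` under `φ × φ` is analytic, and it is nonmeager in each nonempty open set:
if `φ x` and `φ y` were equivalent for generic `(x, y)` in some nonempty open set, there would be
such a pair for which `φ x` is also equivalent to `φ z`, with `z` obtained from `y` by changing one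
bit; but `φ y` and `φ z` are inequivalent (`not_isMeagre_inequiv`). An
analytic set that is nonmeager in each nonempty open set is comeager
(`AnalyticSet.mem_residual`). Finally, by Mycielski's theorem (`exists_mycielski`) there is a
continuous `ψ : (ℕ → Bool) → (ℕ → Bool)` such that distinct points are sent to pairs in `A`; the
range of `φ ∘ ψ` is the required perfect set.
-/

open MeasureTheory Set

namespace Silver

open Filter Topology Function

/-! ### Fusion of large sets of approximations -/

/-- An approximation to a map `(ℕ → Bool) → X`, together with candidates `wit k x` for witnesses
that the values at the two points obtained from `x` by setting the `k`-th bit are inequivalent.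
The approximations of all levels share this one type; the level is recorded by
`Approx.IsValid`. -/
structure Approx (X : Type*) where
  /-- The approximating map. -/
  pt : (ℕ → Bool) → X
  /-- The witnesses. -/
  wit : ℕ → (ℕ → Bool) → ℕ → ℕ

variable {X : Type*}

/-- Validity at level `n`: everything relevant depends on the first `n` bits only, and for `k < n`
the witnesses are mapped by `f` to the pairs they are meant for. -/
def Approx.IsValid (f : (ℕ → ℕ) → X × X) (n : ℕ) (γ : Approx X) : Prop :=
  (∀ x y, (∀ i < n, x i = y i) → γ.pt x = γ.pt y) ∧
  (∀ k < n, ∀ x y, (∀ i < n, x i = y i) → γ.wit k x = γ.wit k y) ∧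
  ∀ k < n, ∀ x, f (γ.wit k x) = (γ.pt (update x k false), γ.pt (update x k true))

/-- A set of approximations is large if no countable union of `E`-classes meets the range of each
of its members. -/
def Large (E : Set (X × X)) (S : Set (Approx X)) : Prop :=
  ∀ D : Set X, D.Countable → ∃ γ ∈ S, ∀ d ∈ D, ∀ x, (d, γ.pt x) ∉ E

/-- The approximation of level `n + 1` made of two approximations of level `n`, the `n`-th bit
deciding which one is used. New witnesses are provided by the map `g`. -/
def glue (g : X × X → ℕ → ℕ) (n : ℕ) (γ δ : Approx X) : Approx X where
  pt x := if x n then δ.pt x else γ.pt x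
  wit k x := if k = n then g (γ.pt x, δ.pt x) else if x n then δ.wit k x else γ.wit k x

/-- All ways of gluing two members of `S` with pairwise inequivalent values. -/
def amalgam (E : Set (X × X)) (g : X × X → ℕ → ℕ) (n : ℕ) (S : Set (Approx X)) :
    Set (Approx X) :=
  {η | ∃ γ ∈ S, ∃ δ ∈ S, (∀ x, (γ.pt x, δ.pt x) ∉ E) ∧ η = glue g n γ δ}

lemma Approx.IsValid.finite_range {f : (ℕ → ℕ) → X × X} {n : ℕ} {γ : Approx X}
    (h : γ.IsValid f n) : (range γ.pt).Finite := by
  refine (Set.finite_range fun s : Fin n → Bool =>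
    γ.pt fun i => if hi : i < n then s ⟨i, hi⟩ else false).subset ?_
  rintro _ ⟨x, rfl⟩
  refine ⟨fun i => x i, h.1 _ _ fun i hi => ?_⟩
  simp [hi]

/-- Two members with inequivalent values are found one after the other, the second one avoiding
the finitely many classes of the values of the first. -/
lemma large_amalgam {E : Set (X × X)} {f : (ℕ → ℕ) → X × X} {g : X × X → ℕ → ℕ} {n : ℕ}
    {S : Set (Approx X)} (hS : ∀ γ ∈ S, γ.IsValid f n) (hl : Large E S) :
    Large E (amalgam E g n S) := by
  intro D hD
  obtain ⟨γ, hγ, h1⟩ := hl D hD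
  obtain ⟨δ, hδ, h2⟩ := hl (D ∪ range γ.pt) (hD.union (hS γ hγ).finite_range.countable)
  refine ⟨glue g n γ δ, ⟨γ, hγ, δ, hδ, fun x => h2 _ (Or.inr ⟨x, rfl⟩) x, rfl⟩, ?_⟩
  intro d hd x
  by_cases hx : x n
  · simpa [glue, hx] using h2 d (Or.inl hd) x
  · simpa [glue, hx] using h1 d hd x

lemma Large.exists_fiber {E : Set (X × X)} {ι : Type*} [Countable ι] {S : Set (Approx X)}
    (hl : Large E S) (c : Approx X → ι) : ∃ j, Large E (S ∩ c ⁻¹' {j}) := by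
  by_contra! h
  simp only [Large, not_forall, exists_prop] at h
  choose D hD h using h
  obtain ⟨γ, hγ, h'⟩ := hl (⋃ j, D j) (countable_iUnion hD)
  exact h (c γ) ⟨γ, ⟨hγ, rfl⟩, fun d hd => h' d (mem_iUnion.2 ⟨_, hd⟩)⟩

lemma isValid_glue {E : Set (X × X)} {f : (ℕ → ℕ) → X × X} {g : X × X → ℕ → ℕ} {n : ℕ}
    (hg : ∀ p ∉ E, f (g p) = p) {γ δ : Approx X} (hγ : γ.IsValid f n) (hδ : δ.IsValid f n)
    (h : ∀ x, (γ.pt x, δ.pt x) ∉ E) : (glue g n γ δ).IsValid f (n + 1) := by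
  refine ⟨fun x y hxy => ?_, fun k hk x y hxy => ?_, fun k hk x => ?_⟩
  · have h' : ∀ i < n, x i = y i := fun i hi => hxy i (by omega)
    simp only [glue, hxy n (by omega), hγ.1 x y h', hδ.1 x y h']
  · have h' : ∀ i < n, x i = y i := fun i hi => hxy i (by omega)
    by_cases hkn : k = n
    · simp only [glue, hkn, if_true, hγ.1 x y h', hδ.1 x y h']
    · have hk' : k < n := by omega
      simp only [glue, hkn, if_false, hxy n (by omega), hγ.2.1 k hk' x y h', hδ.2.1 k hk' x y h']
  · by_cases hkn : k = n
    · subst hkn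
      have h1 : γ.pt (update x k false) = γ.pt x :=
        hγ.1 _ _ fun i hi => update_of_ne hi.ne _ _
      have h2 : δ.pt (update x k true) = δ.pt x :=
        hδ.1 _ _ fun i hi => update_of_ne hi.ne _ _
      simp [glue, hg _ (h x), h1, h2]
    · have hk' : k < n := by omega
      by_cases hx : x n
      · simp [glue, hkn, update_of_ne (Ne.symm hkn), hx, hδ.2.2 k hk' x]
      · simp [glue, hkn, update_of_ne (Ne.symm hkn), hx, hγ.2.2 k hk' x]

/-- A valid large set of approximations of level `n` that are close to each other. -/
def Good [MetricSpace X] (E : Set (X × X)) (f : (ℕ → ℕ) → X × X) (n : ℕ)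
    (S : Set (Approx X)) : Prop :=
  (∀ γ ∈ S, γ.IsValid f n) ∧ Large E S ∧
  ∀ γ ∈ S, ∀ δ ∈ S, ∀ x, dist (γ.pt x) (δ.pt x) ≤ 2 / 2 / 2 ^ n ∧
    ∀ k < n, ∀ i < n, γ.wit k x i = δ.wit k x i

lemma exists_good_subset [MetricSpace X] [SecondCountableTopology X] {E : Set (X × X)}
    {f : (ℕ → ℕ) → X × X} {n : ℕ} {S : Set (Approx X)} (hS : ∀ γ ∈ S, γ.IsValid f n)
    (hl : Large E S) : ∃ T ⊆ S, Good E f n T := by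
  obtain ⟨γ₀, -, -⟩ := hl ∅ countable_empty
  have : Nonempty X := ⟨γ₀.pt fun _ => false⟩
  have hd : ∀ p : X, ∃ i, dist p (TopologicalSpace.denseSeq X i) < 1 / 2 ^ n / 2 := fun p => by
    exact (TopologicalSpace.denseRange_denseSeq X).exists_dist_lt p (by positivity)
  choose a ha using hd
  let pad : (Fin n → Bool) → ℕ → Bool := fun s i => if hi : i < n then s ⟨i, hi⟩ else false
  let c : Approx X → (Fin n → Bool) → ℕ × (Fin n → Fin n → ℕ) :=
    fun γ s => (a (γ.pt (pad s)), fun k i => γ.wit k (pad s) i)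
  obtain ⟨j, hj⟩ := hl.exists_fiber c
  refine ⟨_, inter_subset_left, fun γ hγ => hS γ hγ.1, hj, ?_⟩
  rintro γ ⟨hγS, hγ⟩ δ ⟨hδS, hδ⟩ x
  have hc : c γ = c δ := by
    rw [mem_preimage, mem_singleton_iff] at hγ hδ
    rw [hγ, hδ]
  have hx : ∀ i < n, x i = pad (fun i => x i) i := fun i hi => by simp [pad, hi]
  have hcx := congrFun hc fun i => x i
  have h1 := congrArg Prod.fst hcx
  have h2 := congrArg Prod.snd hcx
  simp only [c] at h1 h2
  rw [← (hS γ hγS).1 _ _ hx, ← (hS δ hδS).1 _ _ hx] at h1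
  constructor
  · have e1 := ha (γ.pt x)
    have e2 := ha (δ.pt x)
    rw [← h1] at e2
    have := dist_triangle_right (γ.pt x) (δ.pt x) (TopologicalSpace.denseSeq X (a (γ.pt x)))
    have h22 : (2 : ℝ) / 2 / 2 ^ n = 1 / 2 ^ n := by norm_num
    rw [h22]
    linarith
  · intro k hk i hi
    have := congrFun (congrFun h2 ⟨k, hk⟩) ⟨i, hi⟩
    simp only at this
    rwa [← (hS γ hγS).2.1 k hk _ _ hx, ← (hS δ hδS).2.1 k hk _ _ hx] at this

lemma exists_good_succ [MetricSpace X] [SecondCountableTopology X] {E : Set (X × X)}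
    {f : (ℕ → ℕ) → X × X} (hf : ∀ p ∉ E, ∃ w, f w = p) {n : ℕ} {S : Set (Approx X)}
    (hS : Good E f n S) : ∃ T, Good E f (n + 1) T ∧ ∀ η ∈ T, ∀ x, ∃ γ ∈ S,
      η.pt x = γ.pt x ∧ ∀ k < n, η.wit k x = γ.wit k x := by
  have hf' : ∀ p, ∃ w, p ∉ E → f w = p := fun p => by
    by_cases hp : p ∈ E
    · exact ⟨0, fun h => (h hp).elim⟩
    · exact (hf p hp).imp fun w hw _ => hw
  choose g hg using hf'
  obtain ⟨T, hTS, hT⟩ := exists_good_subset (f := f) (n := n + 1) (S := amalgam E g n S) (by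
    rintro _ ⟨γ, hγ, δ, hδ, h, rfl⟩
    exact isValid_glue hg (hS.1 γ hγ) (hS.1 δ hδ) h) (large_amalgam hS.1 hS.2.1)
  refine ⟨T, hT, fun η hη x => ?_⟩
  obtain ⟨γ, hγ, δ, hδ, -, rfl⟩ := hTS hη
  by_cases hx : x n
  · refine ⟨δ, hδ, by simp [glue, hx], fun k hk => by simp [glue, hx, hk.ne]⟩
  · refine ⟨γ, hγ, by simp [glue, hx], fun k hk => by simp [glue, hx, hk.ne]⟩

theorem exists_continuous_flip_inequiv [TopologicalSpace X] [PolishSpace X] {E : Set (X × X)}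
    {f : (ℕ → ℕ) → X × X} (hfc : Continuous f) (hf : range f = Eᶜ)
    (hE : ¬ ∃ D : Set X, D.Countable ∧ ∀ x : X, ∃ d ∈ D, (d, x) ∈ E) :
    ∃ φ : (ℕ → Bool) → X, Continuous φ ∧
      ∀ x k, (φ (update x k false), φ (update x k true)) ∉ E := by
  let := TopologicalSpace.upgradeIsCompletelyMetrizable X
  have hf1 : ∀ p ∉ E, ∃ w, f w = p := fun p hp => by
    have : p ∈ range f := by rw [hf]; exact hp
    exact this
  have hf2 : ∀ w, f w ∉ E := fun w => by
    have : f w ∈ Eᶜ := by rw [← hf]; exact mem_range_self w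
    exact this
  have h0 : Large E {γ : Approx X | γ.IsValid f 0} := by
    intro D hD
    by_contra! h
    refine hE ⟨D, hD, fun x => ?_⟩
    obtain ⟨d, hd, y, hy⟩ := h ⟨fun _ => x, fun _ _ => 0⟩ ⟨by simp, by simp, by simp⟩
    exact ⟨d, hd, hy⟩
  obtain ⟨S₀, -, hS₀⟩ := exists_good_subset (n := 0) (fun γ hγ => hγ) h0
  have step : ∀ n (S : {S : Set (Approx X) // Good E f n S}),
      ∃ T : {T : Set (Approx X) // Good E f (n + 1) T}, ∀ η ∈ T.1, ∀ x, ∃ γ ∈ S.1,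
        η.pt x = γ.pt x ∧ ∀ k < n, η.wit k x = γ.wit k x := fun n S => by
    obtain ⟨T, hT, h⟩ := exists_good_succ hf1 S.2
    exact ⟨⟨T, hT⟩, h⟩
  choose next hnext using step
  let S : ∀ n, {S : Set (Approx X) // Good E f n S} := fun n =>
    Nat.rec ⟨S₀, hS₀⟩ (fun n S => next n S) n
  have hS : ∀ n, ∀ η ∈ (S (n + 1)).1, ∀ x, ∃ γ ∈ (S n).1,
      η.pt x = γ.pt x ∧ ∀ k < n, η.wit k x = γ.wit k x := fun n => hnext n (S n)
  have hne : ∀ n, ∃ γ, γ ∈ (S n).1 := fun n => by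
    obtain ⟨γ, hγ, -⟩ := (S n).2.2.1 ∅ countable_empty
    exact ⟨γ, hγ⟩
  choose γ hγ using hne
  have hdist : ∀ x n, dist ((γ n).pt x) ((γ (n + 1)).pt x) ≤ 2 / 2 / 2 ^ n := fun x n => by
    obtain ⟨δ, hδ, h1, -⟩ := hS n _ (hγ (n + 1)) x
    rw [h1]
    exact ((S n).2.2.2 _ (hγ n) _ hδ x).1
  have hwit : ∀ x n, ∀ k < n, ∀ i < n, (γ (n + 1)).wit k x i = (γ n).wit k x i :=
    fun x n k hk i hi => by
    obtain ⟨δ, hδ, -, h1⟩ := hS n _ (hγ (n + 1)) x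
    rw [h1 k hk]
    exact ((S n).2.2.2 _ hδ _ (hγ n) x).2 k hk i hi
  have hlim : ∀ x, ∃ p, Tendsto (fun n => (γ n).pt x) atTop (𝓝 p) := fun x =>
    cauchySeq_tendsto_of_complete (cauchySeq_of_le_geometric_two (hdist x))
  choose φ hφ using hlim
  have hconv : ∀ x n, dist ((γ n).pt x) (φ x) ≤ 2 / 2 ^ n := fun x n =>
    dist_le_of_le_geometric_two_of_tendsto (hdist x) (hφ x) n
  have hcont : ∀ n, Continuous (γ n).pt := fun n => by
    refine IsLocallyConstant.continuous ((IsLocallyConstant.iff_exists_open _).2 fun x => ?_)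
    refine ⟨PiNat.cylinder x n, PiNat.isOpen_cylinder _ x n, PiNat.self_mem_cylinder x n, ?_⟩
    exact fun y hy => ((S n).2.1 _ (hγ n)).1 _ _ hy
  refine ⟨φ, ?_, fun x k hxk => ?_⟩
  · refine continuous_of_uniform_approx_of_continuous fun u hu => ?_
    obtain ⟨ε, hε, hεu⟩ := Metric.mem_uniformity_dist.1 hu
    have ht : Tendsto (fun n : ℕ => 2 * (1 / 2 : ℝ) ^ n) atTop (𝓝 (2 * 0)) :=
      (tendsto_pow_atTop_nhds_zero_of_lt_one (by norm_num) (by norm_num)).const_mul 2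
    rw [mul_zero] at ht
    obtain ⟨n, hn⟩ := (ht.eventually_lt_const hε).exists
    refine ⟨_, hcont n, fun y => hεu ?_⟩
    rw [dist_comm]
    refine (hconv y n).trans_lt (lt_of_eq_of_lt ?_ hn)
    rw [one_div, inv_pow, div_eq_mul_inv]
  -- The witnesses for the pair at hand stabilize bitwise, so `f` maps their limit to the limit
  -- pair, which therefore lies in the range of `f`.
  · have hw : ∀ i m, (γ (k + i + 1 + m)).wit k x i = (γ (k + i + 1)).wit k x i := fun i m => by
      induction m with
      | zero => rfl
      | succ m ih =>
        rw [← ih]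
        exact hwit x (k + i + 1 + m) k (by omega) i (by omega)
    have hwl : Tendsto (fun n => (γ n).wit k x) atTop
        (𝓝 fun i => (γ (k + i + 1)).wit k x i) := by
      refine tendsto_pi_nhds.2 fun i => tendsto_const_nhds.congr' ?_
      filter_upwards [eventually_ge_atTop (k + i + 1)] with n hn
      obtain ⟨m, rfl⟩ := Nat.exists_eq_add_of_le hn
      exact (hw i m).symm
    have h1 := (hfc.tendsto _).comp hwl
    have h2 := (hφ (update x k false)).prodMk_nhds (hφ (update x k true))
    have h3 := tendsto_nhds_unique (h1.congr' (f₂ := fun n =>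
      ((γ n).pt (update x k false), (γ n).pt (update x k true))) (by
        filter_upwards [eventually_gt_atTop k] with n hn
        exact ((S n).2.1 _ (hγ n)).2.2 k hn x)) h2
    exact hf2 _ (h3 ▸ hxk)

/-! ### Category and analytic sets -/

/-- The union of the open sets in which `B` is meager. -/
def meagerPart {Y : Type*} [TopologicalSpace Y] (B : Set Y) : Set Y :=
  ⋃₀ {O | IsOpen O ∧ IsMeagre (B ∩ O)}

lemma isOpen_meagerPart {Y : Type*} [TopologicalSpace Y] (B : Set Y) : IsOpen (meagerPart B) :=
  isOpen_sUnion fun _ h => h.1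

lemma isMeagre_inter_meagerPart {Y : Type*} [TopologicalSpace Y] [SecondCountableTopology Y]
    (B : Set Y) : IsMeagre (B ∩ meagerPart B) := by
  obtain ⟨T, hT, hTs, hTe⟩ := TopologicalSpace.isOpen_sUnion_countable
    {O | IsOpen O ∧ IsMeagre (B ∩ O)} fun _ h => h.1
  rw [meagerPart, ← hTe, sUnion_eq_biUnion, inter_iUnion₂]
  exact isMeagre_biUnion hT fun O hO => (hTs hO).2

/-- If `B` is covered by countably many sets, then modulo a meager set, it is meager near each
point near which all of them are meager. -/
lemma isMeagre_iInter_meagerPart_diff {Y : Type*} [TopologicalSpace Y]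
    [SecondCountableTopology Y] {B : Set Y} {C : ℕ → Set Y} (h : B ⊆ ⋃ i, C i) :
    IsMeagre ((⋂ i, meagerPart (C i)) \ meagerPart B) := by
  set V := ⋂ i, meagerPart (C i) with hV
  have hBV : IsMeagre (B ∩ V) := by
    refine (isMeagre_iUnion fun i => isMeagre_inter_meagerPart (C i)).mono ?_
    rintro y ⟨hyB, hyV⟩
    obtain ⟨i, hi⟩ := mem_iUnion.1 (h hyB)
    exact mem_iUnion.2 ⟨i, hi, mem_iInter.1 hyV i⟩
  -- `V` is a countable intersection of open sets, so it is open modulo a meager set.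
  obtain ⟨O, hO, hVO⟩ : ∃ O, IsOpen O ∧ V =ᶠ[residual Y] O :=
    (BaireMeasurableSet.iInter fun i =>
      (isOpen_meagerPart (C i)).baireMeasurableSet).residualEq_isOpen
  have hN : IsMeagre {y | ¬ (y ∈ V ↔ y ∈ O)} := by
    rw [IsMeagre]
    filter_upwards [hVO] with y hy
    simp only [mem_compl_iff, mem_ofPred_eq, not_not]
    exact iff_of_eq hy
  have hOB : O ⊆ meagerPart B := by
    refine subset_sUnion_of_mem ⟨hO, (hBV.union hN).mono ?_⟩
    rintro y ⟨hyB, hyO⟩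
    by_cases hyV : y ∈ V
    · exact Or.inl ⟨hyB, hyV⟩
    · exact Or.inr fun h => hyV (h.2 hyO)
  refine hN.mono ?_
  rintro y ⟨hyV, hyB⟩ h
  exact hyB (hOB (h.1 hyV))

/-- Write `A` as the range of a continuous `f` on `ℕ → ℕ`. For generic `y`, the previous lemma
yields a branch `x` all of whose cylinders have images that are nonmeager near `y`; then
`f x = y`. -/
theorem AnalyticSet.mem_residual {Y : Type*} [TopologicalSpace Y] [SecondCountableTopology Y]
    [T2Space Y] [BaireSpace Y] {A : Set Y} (hA : AnalyticSet A)
    (h : ∀ O : Set Y, IsOpen O → O.Nonempty → ¬ IsMeagre (A ∩ O)) : A ∈ residual Y := by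
  rw [AnalyticSet] at hA
  rcases hA with rfl | ⟨f, hf, rfl⟩
  · rcases isEmpty_or_nonempty Y with hY | hY
    · rw [eq_univ_of_univ_subset (s := (∅ : Set Y)) fun y => (hY.false y).elim]
      exact univ_mem
    · exact (h univ isOpen_univ univ_nonempty (by simpa using IsMeagre.empty)).elim
  let B : List ℕ → Set Y := fun s => f '' {x | PiNat.res x s.length = s}
  have hB : ∀ s, B s ⊆ ⋃ i, B (i :: s) := by
    rintro s _ ⟨x, hx, rfl⟩
    refine mem_iUnion.2 ⟨x s.length, x, ?_, rfl⟩
    have hx' : PiNat.res x s.length = s := hx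
    simp [PiNat.res_succ, hx']
  have hB0 : meagerPart (B []) = ∅ := by
    have hr : B [] = range f := by simp [B]
    refine sUnion_eq_empty.2 fun O hO => ?_
    by_contra hne
    exact h O hO.1 (nonempty_iff_ne_empty.2 hne) (hr ▸ hO.2)
  have hres : ∀ s, ((⋂ i, meagerPart (B (i :: s))) \ meagerPart (B s))ᶜ ∈ residual Y :=
    fun s => isMeagre_iInter_meagerPart_diff (hB s)
  filter_upwards [countable_iInter_mem.2 hres] with y hy
  have hy' : ∀ s, ∃ i, y ∉ meagerPart (B s) → y ∉ meagerPart (B (i :: s)) := fun s => by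
    have h1 := mem_iInter.1 hy s
    by_contra! h2
    exact h1 ⟨mem_iInter.2 fun i => (h2 i).2, (h2 0).1⟩
  choose next hnext using hy'
  let L : ℕ → List ℕ := fun n => Nat.rec [] (fun _ s => next s :: s) n
  have hL : ∀ n, y ∉ meagerPart (B (L n)) := fun n => by
    induction n with
    | zero => rw [show L 0 = [] from rfl, hB0]; exact notMem_empty y
    | succ n ih => exact hnext _ ih
  let x : ℕ → ℕ := fun n => next (L n)
  have hxL : ∀ n, PiNat.res x n = L n := fun n => by
    induction n with
    | zero => rfl
    | succ n ih => rw [PiNat.res_succ, ih]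
  refine ⟨x, ?_⟩
  by_contra hne
  obtain ⟨U, V, hU, hV, hxU, hyV, hUV⟩ := t2_separation hne
  obtain ⟨_, ⟨z, n, rfl⟩, hxz, hzU⟩ := (PiNat.isTopologicalBasis_cylinders fun _ => ℕ)
    |>.exists_subset_of_mem_open (show x ∈ f ⁻¹' U from hxU) (hU.preimage hf)
  rw [← PiNat.mem_cylinder_iff_eq.1 hxz, PiNat.cylinder_eq_res] at hzU
  refine hL n ⟨V, ⟨hV, IsMeagre.empty.mono ?_⟩, hyV⟩
  rintro _ ⟨⟨w, hw, rfl⟩, hwV⟩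
  refine (hUV.le_bot ⟨hzU ?_, hwV⟩).elim
  have hlen : (L n).length = n := by rw [← hxL n, PiNat.res_length]
  have hw' : PiNat.res w (L n).length = L n := hw
  rw [hlen, ← hxL] at hw'
  exact hw'

lemma tendsto_flip (y : ℕ → Bool) :
    Tendsto (fun k => update y k (!y k)) atTop (𝓝 y) := by
  refine tendsto_pi_nhds.2 fun i => tendsto_const_nhds.congr' ?_
  filter_upwards [eventually_gt_atTop i] with k hk
  rw [update_of_ne hk.ne]

lemma flip_flip (k : ℕ) (y : ℕ → Bool) :
    update (update y k (!y k)) k (!(update y k (!y k)) k) = y := by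
  simp

lemma continuous_flip (k : ℕ) : Continuous fun y : ℕ → Bool => update y k (!y k) := by
  have h : Continuous fun b : Bool => !b := continuous_of_discreteTopology
  exact continuous_id.update k (h.comp (continuous_apply k))

/-- The homeomorphism of `(ℕ → Bool) × (ℕ → Bool)` changing the `k`-th bit of the second point. -/
def flipHomeo (k : ℕ) : ((ℕ → Bool) × (ℕ → Bool)) ≃ₜ ((ℕ → Bool) × (ℕ → Bool)) where
  toFun p := (p.1, update p.2 k (!p.2 k))
  invFun p := (p.1, update p.2 k (!p.2 k))
  left_inv p := Prod.ext rfl (flip_flip k p.2)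
  right_inv p := Prod.ext rfl (flip_flip k p.2)
  continuous_toFun := continuous_fst.prodMk ((continuous_flip k).comp continuous_snd)
  continuous_invFun := continuous_fst.prodMk ((continuous_flip k).comp continuous_snd)

theorem not_isMeagre_inequiv {F : (ℕ → Bool) → (ℕ → Bool) → Prop}
    (hsymm : ∀ x y, F x y → F y x) (htrans : ∀ x y z, F x y → F y z → F x z)
    (hflip : ∀ x k, ¬ F x (update x k (!x k)))
    {O : Set ((ℕ → Bool) × (ℕ → Bool))} (hO : IsOpen O) (hne : O.Nonempty) :
    ¬ IsMeagre ({p | ¬ F p.1 p.2} ∩ O) := by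
  intro hm
  obtain ⟨⟨x₀, y₀⟩, h₀⟩ := hne
  obtain ⟨k, hk⟩ : ∃ k, (x₀, update y₀ k (!y₀ k)) ∈ O :=
    ((tendsto_const_nhds.prodMk_nhds (tendsto_flip y₀)).eventually (hO.mem_nhds h₀)).exists
  have hm' := hm.preimage_of_isOpenMap (flipHomeo k).continuous (flipHomeo k).isOpenMap
  have hO' : IsOpen (O ∩ flipHomeo k ⁻¹' O) := hO.inter (hO.preimage (flipHomeo k).continuous)
  refine not_isMeagre_of_isOpen hO' ⟨(x₀, y₀), h₀, hk⟩ ((hm.union hm').mono ?_)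
  rintro ⟨x, y⟩ ⟨hxy, hxy'⟩
  by_cases h1 : F x y
  · refine Or.inr ⟨fun h2 => ?_, hxy'⟩
    exact hflip y k (htrans _ _ _ (hsymm _ _ h1) h2)
  · exact Or.inl ⟨h1, hxy⟩

/-! ### Mycielski's theorem -/

/-- Codes of Lipschitz maps from the Cantor space to itself: the `n`-th bit of the value depends
on the first `n` bits of the argument. -/
abbrev Code : Type := ∀ n : ℕ, (Fin n → Bool) → Bool

/-- The map with the given code. -/
def decode (z : Code) (x : ℕ → Bool) : ℕ → Bool := fun n => z n fun i => x i

lemma continuous_decode : Continuous fun p : Code × (ℕ → Bool) => decode p.1 p.2 := by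
  refine continuous_pi fun n => ?_
  have h1 : Continuous fun q : ((Fin n → Bool) → Bool) × (Fin n → Bool) => q.1 q.2 :=
    continuous_of_discreteTopology
  have h2 : Continuous fun p : Code × (ℕ → Bool) => (p.1 n, fun i : Fin n => p.2 i) := by fun_prop
  exact h1.comp h2

/-- The codes of maps sending any two points that differ at the bit `k` to a pair in `O`. -/
def goodCodes (O : Set ((ℕ → Bool) × (ℕ → Bool))) (k : ℕ) : Set Code :=
  {z | ∀ x y, x k ≠ y k → (decode z x, decode z y) ∈ O}

lemma isOpen_goodCodes {O : Set ((ℕ → Bool) × (ℕ → Bool))} (hO : IsOpen O) (k : ℕ) :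
    IsOpen (goodCodes O k) := by
  let K : Set (Code × ((ℕ → Bool) × (ℕ → Bool))) :=
    {q | q.2.1 k ≠ q.2.2 k ∧ (decode q.1 q.2.1, decode q.1 q.2.2) ∉ O}
  have hK : IsClosed K := by
    have h1 : IsClosed {q : Code × ((ℕ → Bool) × (ℕ → Bool)) | q.2.1 k ≠ q.2.2 k} := by
      have : Continuous fun q : Code × ((ℕ → Bool) × (ℕ → Bool)) => (q.2.1 k, q.2.2 k) := by
        fun_prop
      exact (isClosed_discrete {b : Bool × Bool | b.1 ≠ b.2}).preimage this
    refine h1.inter (hO.isClosed_compl.preimage (Continuous.prodMk ?_ ?_))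
    · exact continuous_decode.comp (continuous_fst.prodMk (continuous_fst.comp continuous_snd))
    · exact continuous_decode.comp (continuous_fst.prodMk (continuous_snd.comp continuous_snd))
  have hi : IsClosed (Prod.fst '' K) := isClosedMap_fst_of_compactSpace _ hK
  convert! hi.isOpen_compl
  ext z
  simp only [goodCodes, mem_ofPred_eq, mem_compl_iff, mem_image, K]
  constructor
  · rintro h ⟨⟨z', x, y⟩, ⟨h1, h2⟩, rfl⟩
    exact h2 (h x y h1)
  · intro h x y hxy
    by_contra h2
    exact h ⟨(z, x, y), ⟨hxy, h2⟩, rfl⟩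

lemma dense_pairs {ι : Type*} [DecidableEq ι] {O : Set ((ℕ → Bool) × (ℕ → Bool))} (hd : Dense O)
    {s t : ι} (hst : s ≠ t) : Dense {w : ι → ℕ → Bool | (w s, w t) ∈ O} := by
  refine dense_iff_inter_open.2 fun N hN ⟨w, hw⟩ => ?_
  let p : (ℕ → Bool) × (ℕ → Bool) → ι → ℕ → Bool := fun q => update (update w s q.1) t q.2
  have hp : Continuous p := by
    have h0 : Continuous fun _ : (ℕ → Bool) × (ℕ → Bool) => w := continuous_const
    exact (h0.update s continuous_fst).update t continuous_snd
  obtain ⟨q, hqN, hqO⟩ := hd.inter_open_nonempty _ (hN.preimage hp)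
    ⟨(w s, w t), by simpa [p] using hw⟩
  exact ⟨p q, hqN, by simpa [p, update_of_ne hst] using hqO⟩

lemma dense_goodCodes {O : Set ((ℕ → Bool) × (ℕ → Bool))} (hO : IsOpen O) (hd : Dense O)
    (k : ℕ) : Dense (goodCodes O k) := by
  refine dense_iff_inter_open.2 fun N hN ⟨z₀, hz₀⟩ => ?_
  obtain ⟨_, ⟨z₁, m', rfl⟩, hz, hzN⟩ :=
    (PiNat.isTopologicalBasis_cylinders fun n => (Fin n → Bool) → Bool)
    |>.exists_subset_of_mem_open hz₀ hN
  rw [← PiNat.mem_cylinder_iff_eq.1 hz] at hzN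
  -- Bits below `m` are kept; `k < m` makes arguments differing at `k` differ below `m`.
  let m := max m' (k + 1)
  let pad : (Fin m → Bool) → ℕ → Bool := fun s i => if hi : i < m then s ⟨i, hi⟩ else false
  -- The new code maps `x` to `w (x ∣ m)`, where the finitely many points `w s` are chosen
  -- generically among those extending the first `m` bits prescribed by `z₀`.
  let W : Set ((Fin m → Bool) → ℕ → Bool) :=
    ⋂ s, ⋂ j ∈ Finset.range m, {w | w s j = decode z₀ (pad s) j}
  have hW : IsOpen W := by
    refine isOpen_iInter_of_finite fun s => isOpen_biInter_finset fun j _ => ?_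
    have : Continuous fun w : (Fin m → Bool) → ℕ → Bool => w s j := by fun_prop
    exact (isOpen_discrete {decode z₀ (pad s) j}).preimage this
  have hdense : Dense (⋂ q : {q : (Fin m → Bool) × (Fin m → Bool) // q.1 ≠ q.2},
      {w : (Fin m → Bool) → ℕ → Bool | (w q.1.1, w q.1.2) ∈ O}) := by
    refine dense_iInter_of_isOpen (fun q => ?_) fun q => dense_pairs hd q.2
    have : Continuous fun w : (Fin m → Bool) → ℕ → Bool => (w q.1.1, w q.1.2) := by fun_prop
    exact hO.preimage this
  obtain ⟨w, hwW, hw⟩ := hdense.inter_open_nonempty W hW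
    ⟨fun s => decode z₀ (pad s), by simp [W]⟩
  simp only [W, mem_iInter, Finset.mem_range, mem_ofPred_eq] at hwW
  let z : Code := fun n s =>
    if hn : n < m then z₀ n s else w (fun i => s ⟨i, by have := i.2; omega⟩) n
  have hzw : ∀ x, decode z x = w fun i => x i := fun x => by
    funext n
    by_cases hn : n < m
    · rw [hwW _ n hn]
      simp only [decode, z, hn, dif_pos]
      congr 1
      funext i
      have hi : (i : ℕ) < m := i.2.trans hn
      simp [pad, hi]
    · simp only [decode, z, hn, dif_neg, not_false_iff]
  refine ⟨z, hzN fun n hn => ?_, fun x y hxy => ?_⟩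
  · have hn' : n < m := lt_of_lt_of_le hn (le_max_left _ _)
    simp only [z, hn', dif_pos]
  · rw [hzw, hzw]
    refine mem_iInter.1 hw ⟨(_, _), fun h => hxy ?_⟩
    exact congrFun h ⟨k, lt_of_lt_of_le k.lt_succ_self (le_max_right _ _)⟩

theorem exists_mycielski {R : Set ((ℕ → Bool) × (ℕ → Bool))} (hR : R ∈ residual _) :
    ∃ ψ : (ℕ → Bool) → ℕ → Bool, Continuous ψ ∧ ∀ x y, x ≠ y → (ψ x, ψ y) ∈ R := by
  obtain ⟨S, hSo, hSd, hSc, hSR⟩ := mem_residual_iff.1 hR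
  have := hSc.to_subtype
  have hd : Dense (⋂ q : S × ℕ, goodCodes q.1 q.2) :=
    dense_iInter_of_isOpen (fun q => isOpen_goodCodes (hSo _ q.1.2) q.2)
      fun q => dense_goodCodes (hSo _ q.1.2) (hSd _ q.1.2) q.2
  obtain ⟨z, hz⟩ := hd.nonempty
  refine ⟨decode z, continuous_decode.comp (continuous_const.prodMk continuous_id), ?_⟩
  intro x y hxy
  obtain ⟨k, hk⟩ := Function.ne_iff.1 hxy
  exact hSR fun O hO => mem_iInter.1 hz (⟨O, hO⟩, k) x y hk

lemma perfect_range [TopologicalSpace X] [T2Space X] {g : (ℕ → Bool) → X} (hg : Continuous g)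
    (hi : Injective g) : Perfect (range g) := by
  refine ⟨(isCompact_range hg).isClosed, preperfect_iff_nhds.2 ?_⟩
  rintro _ ⟨x, rfl⟩ U hU
  obtain ⟨k, hk⟩ := ((hg.tendsto x).comp (tendsto_flip x) |>.eventually hU).exists
  refine ⟨_, ⟨hk, mem_range_self _⟩, fun h => ?_⟩
  have := congrFun (hi h) k
  simp at this

end Silver

theorem silver {X : Type*} [TopologicalSpace X] [PolishSpace X]
    (E : Set (X × X)) (hE : IsEquivOn (univ : Set X) E)
    (hEco : AnalyticSet Eᶜ) :
    (∃ D : Set X, D.Countable ∧ ∀ x : X, ∃ d ∈ D, (d, x) ∈ E) ∨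
      ∃ P : Set X, Perfect P ∧ P.Nonempty ∧
        ∀ x ∈ P, ∀ y ∈ P, x ≠ y → (x, y) ∉ E := by
  obtain ⟨-, hrefl, hsymm, htrans⟩ := hE
  refine or_iff_not_imp_left.2 fun hD => ?_
  obtain ⟨φ, hφ, hflip⟩ : ∃ φ : (ℕ → Bool) → X, Continuous φ ∧
      ∀ x k, (φ (Function.update x k false), φ (Function.update x k true)) ∉ E := by
    have h := hEco
    rw [AnalyticSet] at h
    rcases h with h | ⟨f, hf, hfE⟩
    -- If `E` is everything, a single class covers `X`.
    · refine (hD ?_).elim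
      have hall : ∀ p, p ∈ E := fun p => by
        rw [compl_empty_iff.1 h]; exact mem_univ p
      rcases isEmpty_or_nonempty X with hX | ⟨⟨a⟩⟩
      · exact ⟨∅, countable_empty, fun x => hX.elim x⟩
      · exact ⟨{a}, countable_singleton a, fun x => ⟨a, rfl, hall _⟩⟩
    · exact Silver.exists_continuous_flip_inequiv hf hfE hD
  have hflip' : ∀ x k, (φ x, φ (Function.update x k (!x k))) ∉ E := fun x k h => by
    have hx : Function.update x k (x k) = x := Function.update_eq_self k x
    have := hflip x k
    cases hk : x k <;> rw [hk] at h hx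
    · rw [hx] at this; exact this h
    · rw [hx] at this; exact this (hsymm _ _ h)
  have hA : {p : (ℕ → Bool) × (ℕ → Bool) | (φ p.1, φ p.2) ∉ E} ∈ residual _ := by
    refine Silver.AnalyticSet.mem_residual ?_ fun O hO hne =>
      Silver.not_isMeagre_inequiv (F := fun x y => (φ x, φ y) ∈ E) (fun _ _ => hsymm _ _)
        (fun _ _ _ => htrans _ _ _) hflip' hO hne
    have : PolishSpace ((ℕ → Bool) × (ℕ → Bool)) := { }
    exact hEco.preimage ((hφ.comp continuous_fst).prodMk (hφ.comp continuous_snd))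
  obtain ⟨ψ, hψ, hψA⟩ := Silver.exists_mycielski hA
  have hinj : Function.Injective (φ ∘ ψ) := fun x y hxy => by
    by_contra hne
    have h1 : (φ (ψ x), φ (ψ y)) ∉ E := hψA x y hne
    have h2 : φ (ψ x) = φ (ψ y) := hxy
    rw [h2] at h1
    exact h1 (hrefl _ (mem_univ _))
  refine ⟨range (φ ∘ ψ), Silver.perfect_range (hφ.comp hψ) hinj, range_nonempty _, ?_⟩
  rintro _ ⟨x, rfl⟩ _ ⟨y, rfl⟩ hne
  exact hψA x y fun h => hne (by rw [h])
end

section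
/- Let I be a σ-ideal on a Polish space X, let B ⊆ X be a Borel I-positive set, and let E be an equivalence relation on B which, viewed as a subset of X × X, is coanalytic. If every E-equivalence class is I-small, then there is a perfect set P ⊆ B whose elements are pairwise E-inequivalent. -/
/-!
Since `I` is a σ-ideal containing every class but not `B`, the set `B` is not covered by countably
many `E`-classes, so the claim is an instance of Silver's theorem. Pulling `E` back along a
continuous surjection of Baire space `ℕ → ℕ` onto `B`, one may assume that the relation, now called
`R`, lives on all of Baire space; its complement is the range of a continuous map `q`. The proof
has two parts, neither of which uses effective methods or transfinite recursion.

*A homomorphism from `E₀`* (`exists_E0_hom`). There is a continuous `φ` from Cantor space such that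
`φ x` and `φ y` are `R`-inequivalent whenever `x ≠ y` agree from some point on. It is obtained by
fusion over families `(γ s)`, `s ∈ 2ⁿ`, of pairwise inequivalent points, with `q`-codes witnessing
inequivalence. A set of such families is *big* if, for each countable union of classes, it has a
member avoiding it. Non-big sets form a σ-ideal, so a big set has big subsets on which any
prescribed finite amount of information is constant. If `S` is big then so is the set of families
indexed by `2ⁿ⁺¹` both of whose halves lie in `S` (`Config.Big.double`): pick the first half in
`S`, then the second in `S` avoiding the countably many classes met by the first.

*Baire category* (`exists_cantor_of_large`). Let `R'` be the pullback of `R` along `φ`. If the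
complement of `R'` were meagre in some open rectangle, then, flipping a late bit of the second
coordinate, some `(x, y)` in the rectangle would satisfy both `R' x y` and `R' x y'` with `y` and
`y'` differing in exactly one bit, contradicting the choice of `φ` (`large_compl`). So the
complement of `R'`, which is analytic, is nonmeagre in every nonempty open set, and a Mycielski-style
fusion, carrying along Suslin codes for the pairs, yields a continuous map from Cantor space into
itself sending distinct points to `R'`-inequivalent points.
-/

open MeasureTheory Set

/-- A σ-ideal on `X`: contains `∅`, downward closed, closed under countable unions. -/
def IsSigmaIdeal {X : Type*} (I : Set (Set X)) : Prop :=
  ∅ ∈ I ∧ (∀ s t : Set X, s ⊆ t → t ∈ I → s ∈ I) ∧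
    ∀ f : ℕ → Set X, (∀ n, f n ∈ I) → (⋃ n, f n) ∈ I

/-! ### Initial segments -/

/-- The restriction of a sequence to its first `n` entries. -/
def tr {α : Type*} (n : ℕ) (x : ℕ → α) : Fin n → α := fun i => x i

lemma tr_succ_eq {α : Type*} (n : ℕ) (x : ℕ → α) :
    tr (n + 1) x = Fin.snoc (α := fun _ => α) (tr n x) (x n) := by
  ext i
  refine Fin.lastCases ?_ (fun j => ?_) i <;> simp [tr]

/-- Points whose initial segments stabilise converge, to the diagonal limit. -/
lemma tendsto_of_tr {α : Type*} [TopologicalSpace α] {z : ℕ → ℕ → α}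
    (h : ∀ n m, n ≤ m → tr n (z m) = tr n (z n)) :
    Filter.Tendsto z Filter.atTop (nhds fun k => z (k + 1) k) := by
  rw [tendsto_pi_nhds]
  intro k
  refine tendsto_const_nhds.congr' ?_
  filter_upwards [Filter.eventually_ge_atTop (k + 1)] with m hm
  have := congrFun (h _ _ hm) ⟨k, by omega⟩
  simpa [tr] using this.symm

lemma continuous_of_tr {α : Type*} [TopologicalSpace α] {n : ℕ} (f : (Fin n → Bool) → α) :
    Continuous fun x : ℕ → Bool => f (tr n x) := by
  have : Continuous (tr n : (ℕ → Bool) → Fin n → Bool) := by unfold tr; fun_prop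
  exact (continuous_of_discreteTopology (f := f)).comp this

/-! ### Big sets of configurations -/

/-- A level-`n` configuration: a point of Baire space for each `s ∈ 2ⁿ`, and for each pair `(s, t)`
a code meant to witness (through `Config.Valid`) that the points at `s` and `t` are inequivalent.
The codes at pairs `(s, s)` carry no information. -/
structure Config (n : ℕ) where
  pt : (Fin n → Bool) → ℕ → ℕ
  wit : (Fin n → Bool) → (Fin n → Bool) → ℕ → ℕ

namespace Config

/-- The part of a configuration sitting over the nodes whose last bit is `i`. -/
def half {n : ℕ} (i : Bool) (c : Config (n + 1)) : Config n where
  pt s := c.pt (Fin.snoc (α := fun _ => Bool) s i)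
  wit s t := c.wit (Fin.snoc (α := fun _ => Bool) s i) (Fin.snoc (α := fun _ => Bool) t i)

/-- For `s ≠ t`, the map `q` sends the code at `(s, t)` to the pair of points at `s` and `t`. -/
def Valid {n : ℕ} (q : (ℕ → ℕ) → (ℕ → ℕ) × (ℕ → ℕ)) (c : Config n) : Prop :=
  ∀ s t, s ≠ t → q (c.wit s t) = (c.pt s, c.pt t)

/-- A set of configurations is big if for each countable union of `R`-classes it has a member none
of whose points lies in that union. -/
def Big (R : (ℕ → ℕ) → (ℕ → ℕ) → Prop) {n : ℕ} (S : Set (Config n)) : Prop :=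
  ∀ Z : Set (ℕ → ℕ), Z.Countable → ∃ c ∈ S, ∀ s, ∀ z ∈ Z, ¬ R z (c.pt s)

/-- The first `m` entries of all points and codes of a configuration. -/
def trunc {n : ℕ} (m : ℕ) (c : Config n) :
    ((Fin n → Bool) → Fin m → ℕ) × ((Fin n → Bool) → (Fin n → Bool) → Fin m → ℕ) :=
  (fun s => tr m (c.pt s), fun s t => tr m (c.wit s t))

variable {R : (ℕ → ℕ) → (ℕ → ℕ) → Prop} {q : (ℕ → ℕ) → (ℕ → ℕ) × (ℕ → ℕ)}

/-- Sets that are not big form a σ-ideal: a countable partition of a big set has a big piece. -/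
lemma Big.exists_fiber {n : ℕ} {S : Set (Config n)} (hS : Big R S) {κ : Type*} [Countable κ]
    (f : Config n → κ) : ∃ k, Big R {c ∈ S | f c = k} := by
  by_contra! h
  simp only [Big, not_forall] at h
  choose Z hZ h using h
  obtain ⟨c, hc, hcZ⟩ := hS (⋃ k, Z k) (countable_iUnion hZ)
  exact h (f c) ⟨c, ⟨hc, rfl⟩, fun s z hz => hcZ s z (mem_iUnion.2 ⟨_, hz⟩)⟩

/-- If `S` is big, so is the set of configurations of the next level with both halves in `S`: the
second half can be chosen to avoid the countably many classes met by the first, which makes all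
cross pairs inequivalent. -/
lemma Big.double (hR : Equivalence R) (hq : range q = {z | ¬ R z.1 z.2}) {n : ℕ}
    {S : Set (Config n)} (hS : Big R S) (hv : ∀ c ∈ S, c.Valid q) :
    Big R {c : Config (n + 1) | c.Valid q ∧ ∀ i, c.half i ∈ S} := by
  have hw : ∀ a b, ∃ w, ¬ R a b → q w = (a, b) := fun a b => by
    by_cases h : R a b
    · exact ⟨0, fun h' => (h' h).elim⟩
    · obtain ⟨w, hw⟩ : (a, b) ∈ range q := by rw [hq]; exact h
      exact ⟨w, fun _ => hw⟩
  choose w hw using hw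
  intro Z hZ
  obtain ⟨c₀, hc₀, h₀⟩ := hS Z hZ
  obtain ⟨c₁, hc₁, h₁⟩ := hS (Z ∪ range c₀.pt) (hZ.union (countable_range _))
  let d : Bool → Config n := fun i => bif i then c₁ else c₀
  have hd : ∀ i, d i ∈ S := by rintro (_ | _) <;> assumption
  have hdZ : ∀ i s, ∀ z ∈ Z, ¬ R z ((d i).pt s) := by
    rintro (_ | _) s z hz
    · exact h₀ s z hz
    · exact h₁ s z (.inl hz)
  have hcross : ∀ i j s t, i ≠ j → ¬ R ((d i).pt s) ((d j).pt t) := by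
    rintro (_ | _) (_ | _) s t hij h
    · exact hij rfl
    · exact h₁ t _ (.inr ⟨s, rfl⟩) h
    · exact h₁ s _ (.inr ⟨t, rfl⟩) (hR.symm h)
    · exact hij rfl
  let P : (Fin (n + 1) → Bool) → ℕ → ℕ := fun s => (d (s (Fin.last n))).pt (Fin.init s)
  let c : Config (n + 1) :=
    { pt := P
      wit := fun s t => if s (Fin.last n) = t (Fin.last n) then
          (d (s (Fin.last n))).wit (Fin.init s) (Fin.init t) else w (P s) (P t) }
  refine ⟨c, ⟨fun s t hst => ?_, fun i => ?_⟩, fun s z hz => hdZ _ _ z hz⟩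
  · by_cases h : s (Fin.last n) = t (Fin.last n)
    · have hi : Fin.init s ≠ Fin.init t := fun hi => hst (by
        rw [← Fin.snoc_init_self s, ← Fin.snoc_init_self t, hi, h])
      have := hv _ (hd (s (Fin.last n))) _ _ hi
      simpa [c, P, h] using this
    · simpa [c, P, h] using hw _ _ (hcross _ _ (Fin.init s) (Fin.init t) h)
  · have : c.half i = d i := by simp [c, P, half]
    rw [this]; exact hd i

end Config

/-! ### The homomorphism from `E₀` -/

open Config in
/-- If `R` has analytic complement and no countable family of classes covers Baire space, then
there is a continuous map from Cantor space sending distinct eventually equal sequences to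
`R`-inequivalent points. -/
theorem exists_E0_hom {R : (ℕ → ℕ) → (ℕ → ℕ) → Prop} (hR : Equivalence R)
    (hcov : ∀ Z : Set (ℕ → ℕ), Z.Countable → ∃ a, ∀ z ∈ Z, ¬ R z a)
    {q : (ℕ → ℕ) → (ℕ → ℕ) × (ℕ → ℕ)} (hqc : Continuous q)
    (hq : range q = {z | ¬ R z.1 z.2}) :
    ∃ φ : (ℕ → Bool) → ℕ → ℕ, Continuous φ ∧
      ∀ x y, x ≠ y → ∀ n, (∀ m, n ≤ m → x m = y m) → ¬ R (φ x) (φ y) := by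
  let Good : ∀ n, Set (Config n) → Prop := fun n S =>
    Big R S ∧ (∀ c ∈ S, c.Valid q) ∧ ∃ k, ∀ c ∈ S, c.trunc n = k
  have h0 : ∃ S, Good 0 S := by
    refine ⟨univ, fun Z hZ => ?_, fun c _ s t hst => (hst (Subsingleton.elim _ _)).elim,
      default, fun c _ => Subsingleton.elim _ _⟩
    obtain ⟨a, ha⟩ := hcov Z hZ
    exact ⟨⟨fun _ => a, fun _ _ => a⟩, mem_univ _, fun _ => ha⟩
  have hstep : ∀ n (S : {S // Good n S}), ∃ T : {T // Good (n + 1) T},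
      ∀ c ∈ T.1, ∀ i, half i c ∈ S.1 := by
    rintro n ⟨S, hS, hv, -⟩
    obtain ⟨k, hk⟩ := (hS.double hR hq hv).exists_fiber (trunc (n + 1))
    exact ⟨⟨_, hk, fun c hc => hc.1.1, k, fun c hc => hc.2⟩, fun c hc => hc.1.2⟩
  choose step hstep using hstep
  obtain ⟨S0, hS0⟩ := h0
  let S : ∀ n, {S // Good n S} := fun n => Nat.rec ⟨S0, hS0⟩ step n
  have hS : ∀ n, ∀ c ∈ (S (n + 1)).1, ∀ i, half i c ∈ (S n).1 := fun n => hstep n (S n)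
  have hne : ∀ n, ∃ c, c ∈ (S n).1 := fun n => by
    obtain ⟨c, hc, -⟩ := (S n).2.1 ∅ countable_empty
    exact ⟨c, hc⟩
  choose c hc using hne
  -- Passing from level `m` to level `n` by repeatedly taking halves preserves the points over `x`
  -- and `y` and the code of the pair, provided `x` and `y` select the same halves.
  have key : ∀ n m, n ≤ m → ∀ x y : ℕ → Bool, (∀ k, n ≤ k → x k = y k) → ∀ d ∈ (S m).1,
      ∃ e ∈ (S n).1, e.pt (tr n x) = d.pt (tr m x) ∧
        e.wit (tr n x) (tr n y) = d.wit (tr m x) (tr m y) := by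
    intro n m hnm x y hxy
    induction m, hnm using Nat.le_induction with
    | base => exact fun d hd => ⟨d, hd, rfl, rfl⟩
    | succ m hm ih =>
      intro d hd
      obtain ⟨e, he, h1, h2⟩ := ih _ (hS m d hd (x m))
      refine ⟨e, he, ?_, ?_⟩
      · rw [h1, tr_succ_eq]; rfl
      · rw [h2, tr_succ_eq, tr_succ_eq, ← hxy m hm]; rfl
  have hpt : ∀ x n m, n ≤ m → tr n ((c m).pt (tr m x)) = tr n ((c n).pt (tr n x)) := by
    intro x n m hnm
    obtain ⟨e, he, h1, -⟩ := key n m hnm x x (fun _ _ => rfl) (c m) (hc m)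
    obtain ⟨k, hk⟩ := (S n).2.2.2
    have := (hk e he).trans (hk _ (hc n)).symm
    rw [← h1]
    exact congrFun (congrArg Prod.fst this) _
  have hlim := fun x => tendsto_of_tr (hpt x)
  refine ⟨fun x k => (c (k + 1)).pt (tr (k + 1) x) k, ?_, ?_⟩
  · refine continuous_pi fun k => ?_
    exact continuous_of_tr (fun s => (c (k + 1)).pt s k)
  · intro x y hxy n hn
    -- the witnesses only cohere from level `n` on
    have hwit : ∀ j m, j ≤ m → tr j ((c (n + m)).wit (tr _ x) (tr _ y)) =
        tr j ((c (n + j)).wit (tr _ x) (tr _ y)) := by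
      intro j m hjm
      obtain ⟨e, he, -, h1⟩ := key (n + j) (n + m) (by omega) x y
        (fun k hk => hn k (by omega)) (c _) (hc _)
      obtain ⟨k, hk⟩ := (S (n + j)).2.2.2
      have := (hk e he).trans (hk _ (hc _)).symm
      rw [← h1]
      have h2 := congrFun (congrFun (congrArg Prod.snd this) (tr _ x)) (tr _ y)
      ext i
      exact congrFun h2 ⟨i, by omega⟩
    have h1 := (hqc.tendsto _).comp (tendsto_of_tr hwit)
    have h2 := ((hlim x).comp (Filter.tendsto_add_atTop_nat n)).prodMk_nhds
      ((hlim y).comp (Filter.tendsto_add_atTop_nat n))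
    have hneq : ∃ k, x k ≠ y k := Function.ne_iff.1 hxy
    obtain ⟨k, hk⟩ := hneq
    have h3 := tendsto_nhds_unique_of_eventuallyEq h1 h2 (by
      filter_upwards [Filter.eventually_gt_atTop k] with m hm
      have : tr (n + m) x ≠ tr (n + m) y := fun h => hk (congrFun h ⟨k, by omega⟩)
      have h4 := (S (n + m)).2.2.1 _ (hc _) _ _ this
      simp only [Function.comp_apply]
      rw [add_comm m n]
      exact h4)
    have h5 : _ ∈ range q := ⟨_, h3⟩
    rw [hq] at h5
    exact h5

/-! ### Category and the splitting of large sets -/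

/-- `A` is large in `V` if it is nonmeagre in every nonempty open subset of `V`. -/
def Large {Y : Type*} [TopologicalSpace Y] (A V : Set Y) : Prop :=
  ∀ V' ⊆ V, IsOpen V' → V'.Nonempty → ¬ IsMeagre (A ∩ V')

lemma Large.mono {Y : Type*} [TopologicalSpace Y] {A V V' : Set Y} (h : Large A V)
    (hV : V' ⊆ V) : Large A V' := fun W hW => h W (hW.trans hV)

/-- If a countable union is large in `V`, then one of its members is large in a smaller open set;
this is the Banach category theorem for second countable spaces. -/
lemma Large.split {Y : Type*} [TopologicalSpace Y] [SecondCountableTopology Y] {κ : Type*}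
    [Countable κ] {A : κ → Set Y} {V : Set Y} (h : Large (⋃ k, A k) V) (hV : IsOpen V)
    (hne : V.Nonempty) : ∃ k, ∃ V' ⊆ V, IsOpen V' ∧ V'.Nonempty ∧ Large (A k) V' := by
  by_contra! hcon
  refine h V subset_rfl hV hne ?_
  rw [iUnion_inter]
  refine isMeagre_iUnion fun k => ?_
  let b := TopologicalSpace.countableBasis Y
  -- `W` is the part of the space where `A k` is locally meagre; it is dense in `V`.
  let W := ⋃ u ∈ {u ∈ b | IsMeagre (A k ∩ u)}, u
  have hb : {u ∈ b | IsMeagre (A k ∩ u)}.Countable :=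
    (TopologicalSpace.countable_countableBasis Y).mono (sep_subset _ _)
  have hW : IsMeagre (A k ∩ W) := by
    rw [inter_iUnion₂]
    exact isMeagre_biUnion hb fun u hu => hu.2
  have hnd : IsNowhereDense (V \ W) := by
    rw [IsNowhereDense, ← not_nonempty_iff_eq_empty]
    rintro hO
    set O := interior (closure (V \ W)) with hOdef
    have hOV : (O ∩ V).Nonempty := by
      obtain ⟨x, hx⟩ := hO
      obtain ⟨y, hy, hy'⟩ := mem_closure_iff.1 (interior_subset hx) O isOpen_interior hx
      exact ⟨y, hy, hy'.1⟩
    have := hcon k (O ∩ V) inter_subset_right (isOpen_interior.inter hV) hOV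
    simp only [Large, not_forall, not_not] at this
    obtain ⟨V', hV', hV'o, ⟨y, hy⟩, hm⟩ := this
    obtain ⟨u, hu, hyu, huV⟩ :=
      (TopologicalSpace.isBasis_countableBasis Y).exists_subset_of_mem_open hy hV'o
    have huW : u ⊆ W := subset_biUnion_of_mem (u := fun u : Set Y => u)
      (show u ∈ {u ∈ b | IsMeagre (A k ∩ u)} from
        ⟨hu, hm.mono (inter_subset_inter_right _ huV)⟩)
    obtain ⟨z, hz, hz'⟩ := mem_closure_iff.1 (interior_subset (hV' hy).1) u
      ((TopologicalSpace.isBasis_countableBasis Y).isOpen hu) hyu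
    exact hz'.2 (huW hz)
  refine (hW.union hnd.isMeagre).mono fun x hx => ?_
  by_cases hxW : x ∈ W
  · exact .inl ⟨hx.1, hxW⟩
  · exact .inr ⟨hx.2, hxW⟩

/-- `Large.split` applied to all off-diagonal rectangles `U s ×ˢ U t` of a finite family at once,
shrinking the sets `U s` one pair at a time. -/
lemma exists_refine {ι Y κ : Type*} [Finite ι] [TopologicalSpace Y] [SecondCountableTopology Y]
    [Countable κ] [Nonempty κ] (U : ι → Set Y) (hU : ∀ s, IsOpen (U s) ∧ (U s).Nonempty)
    (A : ι → ι → κ → Set (Y × Y)) (hA : ∀ s t, s ≠ t → Large (⋃ k, A s t k) (U s ×ˢ U t)) :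
    ∃ (U' : ι → Set Y) (k : ι → ι → κ), (∀ s, U' s ⊆ U s ∧ IsOpen (U' s) ∧ (U' s).Nonempty) ∧
      ∀ s t, s ≠ t → Large (A s t (k s t)) (U' s ×ˢ U' t) := by
  classical
  have := Fintype.ofFinite ι
  suffices H : ∀ P : Finset (ι × ι), ∃ (U' : ι → Set Y) (k : ι → ι → κ),
      (∀ s, U' s ⊆ U s ∧ IsOpen (U' s) ∧ (U' s).Nonempty) ∧
      ∀ s t, (s, t) ∈ P → s ≠ t → Large (A s t (k s t)) (U' s ×ˢ U' t) by
    obtain ⟨U', k, h1, h2⟩ := H Finset.univ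
    exact ⟨U', k, h1, fun s t => h2 s t (Finset.mem_univ _)⟩
  intro P
  induction P using Finset.induction_on with
  | empty => exact ⟨U, fun _ _ => Classical.arbitrary κ, fun s => ⟨subset_rfl, hU s⟩, by simp⟩
  | insert p P hp ih =>
    obtain ⟨U', k, h1, h2⟩ := ih
    obtain ⟨s, t⟩ := p
    by_cases hst : s = t
    · refine ⟨U', k, h1, fun s' t' h hne => ?_⟩
      rcases Finset.mem_insert.1 h with h | h
      · obtain ⟨rfl, rfl⟩ := Prod.mk.inj h
        exact (hne hst).elim
      · exact h2 s' t' h hne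
    obtain ⟨j, V, hV, hVo, ⟨⟨a, b⟩, hab⟩, hL⟩ :=
      ((hA s t hst).mono (prod_mono (h1 s).1 (h1 t).1)).split
        ((h1 s).2.1.prod (h1 t).2.1) ((h1 s).2.2.prod (h1 t).2.2)
    obtain ⟨O₁, O₂, ho₁, ho₂, ha, hb, hO⟩ := isOpen_prod_iff.1 hVo a b hab
    let U'' : ι → Set Y := fun i => if i = s then O₁ ∩ U' s else if i = t then O₂ ∩ U' t else U' i
    have hab' := hV hab
    have hU'' : ∀ i, U'' i ⊆ U' i := by
      intro i
      simp only [U'']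
      split_ifs with h h'
      · subst h; exact inter_subset_right
      · subst h'; exact inter_subset_right
      · rfl
    have hs : U'' s ⊆ O₁ := by simp [U'']
    have ht : U'' t ⊆ O₂ := by simp [U'', Ne.symm hst]
    refine ⟨U'', fun s' t' => if (s', t') = (s, t) then j else k s' t',
      fun i => ⟨(hU'' i).trans (h1 i).1, ?_⟩, fun s' t' h hne => ?_⟩
    · simp only [U'']
      split_ifs with h h'
      · exact ⟨ho₁.inter (h1 s).2.1, a, ha, hab'.1⟩
      · exact ⟨ho₂.inter (h1 t).2.1, b, hb, hab'.2⟩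
      · exact (h1 i).2
    · by_cases heq : (s', t') = (s, t)
      · obtain ⟨rfl, rfl⟩ := Prod.mk.inj heq
        simp only [if_true]
        exact hL.mono ((prod_mono hs ht).trans hO)
      · beta_reduce
        rw [if_neg heq]
        exact (h2 s' t' ((Finset.mem_insert.1 h).resolve_left heq) hne).mono
          (prod_mono (hU'' _) (hU'' _))

/-- The homeomorphism of Cantor space negating the `k`-th bit. -/
def bitFlip (k : ℕ) : (ℕ → Bool) ≃ₜ (ℕ → Bool) where
  toFun x := Function.update x k (!x k)
  invFun x := Function.update x k (!x k)
  left_inv x := by simp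
  right_inv x := by simp
  continuous_toFun := by fun_prop
  continuous_invFun := by fun_prop

lemma bitFlip_apply (k : ℕ) (x : ℕ → Bool) : bitFlip k x = Function.update x k (!x k) := rfl

lemma bitFlip_ne (k : ℕ) (x : ℕ → Bool) : bitFlip k x ≠ x := fun h => by
  have := congrFun h k
  simp [bitFlip_apply] at this

lemma tendsto_bitFlip (x : ℕ → Bool) :
    Filter.Tendsto (fun k => bitFlip k x) Filter.atTop (nhds x) := by
  rw [tendsto_pi_nhds]
  intro j
  refine tendsto_const_nhds.congr' ?_
  filter_upwards [Filter.eventually_gt_atTop j] with k hk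
  simp [bitFlip_apply, Function.update_of_ne hk.ne]

/-- An equivalence relation on Cantor space that never relates points differing in exactly one bit
has a complement that is nonmeagre in every nonempty open set. -/
lemma large_compl {R : (ℕ → Bool) → (ℕ → Bool) → Prop} (hR : Equivalence R)
    (hE0 : ∀ x k, ¬ R x (bitFlip k x)) : Large {z : (ℕ → Bool) × (ℕ → Bool) | ¬ R z.1 z.2} univ := by
  rintro V - hV ⟨⟨a, b⟩, hab⟩ hm
  obtain ⟨O₁, O₂, ho₁, ho₂, ha, hb, hO⟩ := isOpen_prod_iff.1 hV a b hab
  -- A bit `k` so late that `O₂` and its image under flipping bit `k` intersect.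
  obtain ⟨k, hk⟩ := ((tendsto_bitFlip b).eventually (ho₂.mem_nhds hb)).exists
  let F : (ℕ → Bool) × (ℕ → Bool) ≃ₜ (ℕ → Bool) × (ℕ → Bool) :=
    (Homeomorph.refl _).prodCongr (bitFlip k)
  have hm' := hm.preimage_of_isOpenMap F.continuous F.isOpenMap
  refine not_isMeagre_of_isOpen (ho₁.prod (ho₂.inter (ho₂.preimage (bitFlip k).continuous)))
    ⟨(a, b), ha, hb, hk⟩ ((hm.union hm').mono ?_)
  rintro ⟨x, y⟩ ⟨hx, hy, hy'⟩
  by_contra hcon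
  simp only [mem_union, mem_inter_iff, mem_preimage, mem_ofPred_eq, not_or, not_and', not_not] at hcon
  have h1 := hcon.1 (hO ⟨hx, hy⟩)
  have h2 := hcon.2 (hO ⟨hx, hy'⟩)
  exact hE0 y k (hR.trans (hR.symm h1) h2)

/-! ### The Mycielski fusion -/

/-- Data at level `n` of the fusion: a subset `U s` of Cantor space for each `s ∈ 2ⁿ`, and for each
pair `(s, t)` a set `D s t` of codes, only relevant when `s ≠ t`. -/
structure Stage_s3 (n : ℕ) where
  U : (Fin n → Bool) → Set (ℕ → Bool)
  D : (Fin n → Bool) → (Fin n → Bool) → Set (ℕ → ℕ)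

/-- Requirements on a stage: the `U s` are nonempty open sets on which the first `n` bits are
constant, and for `s ≠ t` the codes in `D s t` agree on their first `n` entries and have a `q`-image
that is large in `U s ×ˢ U t`. -/
structure Stage_s3.Good (q : (ℕ → ℕ) → (ℕ → Bool) × (ℕ → Bool)) {n : ℕ} (d : Stage_s3 n) : Prop where
  isOpen : ∀ s, IsOpen (d.U s)
  nonempty : ∀ s, (d.U s).Nonempty
  truncU : ∀ s, ∀ x ∈ d.U s, ∀ y ∈ d.U s, tr n x = tr n y
  truncD : ∀ s t, s ≠ t → ∀ x ∈ d.D s t, ∀ y ∈ d.D s t, tr n x = tr n y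
  large : ∀ s t, s ≠ t → Large (q '' d.D s t) (d.U s ×ˢ d.U t)

lemma Stage_s3.Good.next {q : (ℕ → ℕ) → (ℕ → Bool) × (ℕ → Bool)} (hq : Large (range q) univ)
    {n : ℕ} {d : Stage_s3 n} (hd : d.Good q) : ∃ d' : Stage_s3 (n + 1), d'.Good q ∧
      (∀ s, d'.U s ⊆ d.U (Fin.init s)) ∧
      ∀ s t, Fin.init s ≠ Fin.init t → d'.D s t ⊆ d.D (Fin.init s) (Fin.init t) := by
  classical
  choose pt hpt using hd.nonempty
  have hcont : Continuous (tr (n + 1) : (ℕ → Bool) → Fin (n + 1) → Bool) := by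
    unfold tr; fun_prop
  let U₀ : (Fin (n + 1) → Bool) → Set (ℕ → Bool) := fun s =>
    d.U (Fin.init s) ∩ {x | tr (n + 1) x = tr (n + 1) (pt (Fin.init s))}
  have hU₀ : ∀ s, IsOpen (U₀ s) ∧ (U₀ s).Nonempty := fun s =>
    ⟨(hd.isOpen _).inter ((isOpen_discrete {tr (n + 1) (pt (Fin.init s))}).preimage hcont),
      _, hpt _, rfl⟩
  -- Nodes with a common parent have not been assigned codes yet, so any code is allowed.
  let D₀ : (Fin (n + 1) → Bool) → (Fin (n + 1) → Bool) → Set (ℕ → ℕ) := fun s t =>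
    if Fin.init s = Fin.init t then univ else d.D (Fin.init s) (Fin.init t)
  have hD₀ : ∀ s t, Large (q '' D₀ s t) (U₀ s ×ˢ U₀ t) := by
    intro s t
    by_cases h : Fin.init s = Fin.init t
    · simp only [D₀, if_pos h, image_univ]
      exact hq.mono (subset_univ _)
    · simp only [D₀, if_neg h]
      exact (hd.large _ _ h).mono (prod_mono inter_subset_left inter_subset_left)
  obtain ⟨U', k, h1, h2⟩ := exists_refine (κ := Fin (n + 1) → ℕ) U₀ hU₀
    (fun s t k => q '' (D₀ s t ∩ {z | tr (n + 1) z = k})) (fun s t _ => by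
      rw [← image_iUnion, ← inter_iUnion]
      have : (⋃ k : Fin (n + 1) → ℕ, {z : ℕ → ℕ | tr (n + 1) z = k}) = univ := by
        ext; simp
      rw [this, inter_univ]
      exact hD₀ s t)
  refine ⟨⟨U', fun s t => D₀ s t ∩ {z | tr (n + 1) z = k s t}⟩,
    ⟨fun s => (h1 s).2.1, fun s => (h1 s).2.2, fun s x hx y hy => ?_,
      fun s t _ x hx y hy => hx.2.trans hy.2.symm, h2⟩,
    fun s => (h1 s).1.trans inter_subset_left, fun s t hst => ?_⟩
  · exact ((h1 s).1 hx).2.trans ((h1 s).1 hy).2.symm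
  · simp only [D₀, if_neg hst]
    exact inter_subset_left

/-- A Mycielski theorem for analytic sets: if the range of `q` is nonmeagre in every nonempty open
set, it contains all pairs of distinct points of some continuous image of Cantor space. -/
theorem exists_cantor_of_large {q : (ℕ → ℕ) → (ℕ → Bool) × (ℕ → Bool)} (hqc : Continuous q)
    (hq : Large (range q) univ) :
    ∃ g : (ℕ → Bool) → ℕ → Bool, Continuous g ∧ ∀ x y, x ≠ y → (g x, g y) ∈ range q := by
  have h0 : ∃ d : Stage_s3 0, d.Good q :=
    ⟨⟨fun _ => univ, fun _ _ => univ⟩, fun _ => isOpen_univ, fun _ => univ_nonempty,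
      fun _ _ _ _ _ => Subsingleton.elim _ _, fun s t h => (h (Subsingleton.elim _ _)).elim,
      fun s t h => (h (Subsingleton.elim _ _)).elim⟩
  have hstep : ∀ n (d : {d : Stage_s3 n // d.Good q}), ∃ d' : {d : Stage_s3 (n + 1) // d.Good q},
      (∀ s, d'.1.U s ⊆ d.1.U (Fin.init s)) ∧
      ∀ s t, Fin.init s ≠ Fin.init t → d'.1.D s t ⊆ d.1.D (Fin.init s) (Fin.init t) := by
    rintro n ⟨d, hd⟩
    obtain ⟨d', hd', h⟩ := hd.next hq
    exact ⟨⟨d', hd'⟩, h⟩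
  choose step hstepU hstepD using hstep
  obtain ⟨d0, hd0⟩ := h0
  let d : ∀ n, {d : Stage_s3 n // d.Good q} := fun n => Nat.rec ⟨d0, hd0⟩ step n
  have hU : ∀ x : ℕ → Bool, Antitone fun n => (d n).1.U (tr n x) := fun x =>
    antitone_nat_of_succ_le fun n => hstepU n (d n) (tr (n + 1) x)
  have hD : ∀ (x y : ℕ → Bool) n, tr n x ≠ tr n y → ∀ m, n ≤ m →
      (d m).1.D (tr m x) (tr m y) ⊆ (d n).1.D (tr n x) (tr n y) := by
    intro x y n hn m hnm
    induction m, hnm using Nat.le_induction with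
    | base => rfl
    | succ m hm ih =>
      refine (hstepD m (d m) (tr (m + 1) x) (tr (m + 1) y) fun h => hn ?_).trans ih
      ext i
      exact congrFun h ⟨i, by omega⟩
  choose c hc using fun n => (d n).2.nonempty
  have hlim : ∀ (x : ℕ → Bool) (z : ℕ → ℕ → Bool), (∀ n, z n ∈ (d n).1.U (tr n x)) →
      ∀ n m, n ≤ m → tr n (z m) = tr n (z n) := fun x z hz n m hnm =>
    (d n).2.truncU _ _ (hU x hnm (hz m)) _ (hz n)
  refine ⟨fun x k => c (k + 1) (tr (k + 1) x) k, continuous_pi fun k =>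
    continuous_of_tr (fun s => c (k + 1) s k), fun x y hxy => ?_⟩
  obtain ⟨k, hk⟩ := Function.ne_iff.1 hxy
  have hne : ∀ m, tr (k + 1 + m) x ≠ tr (k + 1 + m) y := fun m h =>
    hk (congrFun h ⟨k, by omega⟩)
  have hw : ∀ m, ∃ w ∈ (d (k + 1 + m)).1.D (tr _ x) (tr _ y),
      q w ∈ (d (k + 1 + m)).1.U (tr _ x) ×ˢ (d (k + 1 + m)).1.U (tr _ y) := by
    intro m
    have h := (d (k + 1 + m)).2
    obtain ⟨_, ⟨w, hw, rfl⟩, hw'⟩ := nonempty_of_not_isMeagre (h.large _ _ (hne m) _ subset_rfl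
      ((h.isOpen _).prod (h.isOpen _)) ((h.nonempty _).prod (h.nonempty _)))
    exact ⟨w, hw, hw'⟩
  choose w hwD hwU using hw
  -- The codes `w m` converge, and `q` sends their limit to the pair of limit points.
  have hwt : ∀ n m, n ≤ m → tr n (w m) = tr n (w n) := by
    intro n m hnm
    have := (d (k + 1 + n)).2.truncD _ _ (hne n) _
      (hD x y _ (hne n) _ (by omega) (hwD m)) _ (hwD n)
    ext i
    exact congrFun this ⟨i, by omega⟩
  have h1 := (hqc.tendsto _).comp (tendsto_of_tr hwt)
  have hgen : ∀ (x : ℕ → Bool) (z : ℕ → ℕ → Bool),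
      (∀ m, z m ∈ (d (k + 1 + m)).1.U (tr _ x)) →
      Filter.Tendsto z Filter.atTop (nhds fun k => c (k + 1) (tr (k + 1) x) k) := by
    intro x z hz
    rw [tendsto_pi_nhds]
    intro j
    refine tendsto_const_nhds.congr' ?_
    filter_upwards [Filter.eventually_ge_atTop (j + 1)] with m hm
    have := (d (j + 1)).2.truncU _ _ (hU x (show j + 1 ≤ k + 1 + m by omega) (hz m)) _ (hc _ _)
    exact (congrFun this ⟨j, by omega⟩).symm
  have h2 := (hgen x (fun m => (q (w m)).1) fun m => (hwU m).1).prodMk_nhds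
    (hgen y (fun m => (q (w m)).2) fun m => (hwU m).2)
  exact ⟨_, tendsto_nhds_unique h1 h2⟩

/-! ### Silver's theorem and the conclusion -/

lemma perfect_range_s3 {X : Type*} [TopologicalSpace X] [T2Space X] {h : (ℕ → Bool) → X}
    (hc : Continuous h) (hi : Function.Injective h) : Perfect (range h) := by
  refine ⟨(isCompact_range hc).isClosed, preperfect_iff_nhds.2 ?_⟩
  rintro _ ⟨x, rfl⟩ V hV
  obtain ⟨k, hk⟩ := (((hc.tendsto x).comp (tendsto_bitFlip x)).eventually hV).exists
  exact ⟨_, ⟨hk, mem_range_self _⟩, fun heq => bitFlip_ne k x (hi heq)⟩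

/-- Silver's theorem for coanalytic equivalence relations on Baire space. -/
theorem exists_cantor_inequivalent {R : (ℕ → ℕ) → (ℕ → ℕ) → Prop} (hR : Equivalence R)
    (hA : AnalyticSet {z : (ℕ → ℕ) × (ℕ → ℕ) | ¬ R z.1 z.2})
    (hcov : ∀ Z : Set (ℕ → ℕ), Z.Countable → ∃ a, ∀ z ∈ Z, ¬ R z a) :
    ∃ g : (ℕ → Bool) → ℕ → ℕ, Continuous g ∧ ∀ x y, x ≠ y → ¬ R (g x) (g y) := by
  have hA' := hA
  rw [AnalyticSet] at hA
  rcases hA with hA | ⟨q, hqc, hq⟩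
  · obtain ⟨a, ha⟩ := hcov {0} (countable_singleton _)
    have : ((0, a) : (ℕ → ℕ) × (ℕ → ℕ)) ∈ {z : (ℕ → ℕ) × (ℕ → ℕ) | ¬ R z.1 z.2} := ha 0 rfl
    rw [hA] at this
    exact this.elim
  obtain ⟨φ, hφ, hE0⟩ := exists_E0_hom hR hcov hqc hq
  have hR' : Equivalence fun x y => R (φ x) (φ y) :=
    ⟨fun _ => hR.refl _, fun h => hR.symm h, fun h h' => hR.trans h h'⟩
  have hL := large_compl hR' fun x k => hE0 x (bitFlip k x) (bitFlip_ne k x).symm (k + 1)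
    fun m hm => by simp [bitFlip_apply, Function.update_of_ne (show m ≠ k by omega)]
  -- Instance search does not find `PolishSpace ((ℕ → Bool) × (ℕ → Bool))` without this.
  have hpol : PolishSpace Bool := inferInstance
  have hpre := hA'.preimage (hφ.prodMap hφ)
  rw [AnalyticSet] at hpre
  rcases hpre with h | ⟨r, hrc, hr⟩
  · have : ((0, bitFlip 0 0) : (ℕ → Bool) × (ℕ → Bool)) ∈
        Prod.map φ φ ⁻¹' {z : (ℕ → ℕ) × (ℕ → ℕ) | ¬ R z.1 z.2} :=
      hE0 _ _ (bitFlip_ne 0 0).symm 1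
        fun m hm => by simp [bitFlip_apply, Function.update_of_ne (show m ≠ 0 by omega)]
    rw [h] at this
    exact this.elim
  · obtain ⟨g, hg, hgr⟩ := exists_cantor_of_large hrc (by rw [hr]; exact hL)
    refine ⟨φ ∘ g, hφ.comp hg, fun x y hxy => ?_⟩
    have := hgr x y hxy
    rw [hr] at this
    exact this


theorem psp_proper_pi11 {X : Type*} [TopologicalSpace X] [PolishSpace X]
    [MeasurableSpace X] [BorelSpace X]
    (I : Set (Set X)) (hI : IsSigmaIdeal I)
    (B : Set X) (hBborel : MeasurableSet B) (hBpos : B ∉ I)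
    (E : Set (X × X)) (hE : IsEquivOn B E) (hEco : AnalyticSet Eᶜ)
    (hclasses : ∀ x ∈ B, {y | (x, y) ∈ E} ∈ I) :
    ∃ P : Set X, P ⊆ B ∧ Perfect P ∧ P.Nonempty ∧
      ∀ x ∈ P, ∀ y ∈ P, x ≠ y → (x, y) ∉ E := by
  obtain ⟨hsub, hrefl, hsymm, htrans⟩ := hE
  obtain ⟨hI0, hImono, hIun⟩ := hI
  have hBan := hBborel.analyticSet
  rw [AnalyticSet] at hBan
  rcases hBan with rfl | ⟨p, hpc, rfl⟩
  · exact (hBpos hI0).elim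
  have hR : Equivalence fun a b => (p a, p b) ∈ E :=
    ⟨fun a => hrefl _ (mem_range_self a), fun h => hsymm _ _ h, fun h h' => htrans _ _ _ h h'⟩
  have hcov : ∀ Z : Set (ℕ → ℕ), Z.Countable → ∃ a, ∀ z ∈ Z, (p z, p a) ∉ E := by
    intro Z hZ
    by_contra! h
    obtain ⟨z, hz, -⟩ := h 0
    obtain ⟨f, rfl⟩ := hZ.exists_eq_range ⟨z, hz⟩
    refine hBpos (hImono _ _ ?_
      (hIun (fun n => {y | (p (f n), y) ∈ E}) fun n => hclasses _ (mem_range_self _)))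
    rintro _ ⟨a, rfl⟩
    obtain ⟨_, ⟨n, rfl⟩, hn⟩ := h a
    exact mem_iUnion.2 ⟨n, hn⟩
  obtain ⟨g, hg, hgE⟩ := exists_cantor_inequivalent hR (hEco.preimage (hpc.prodMap hpc)) hcov
  have hinj : Function.Injective (p ∘ g) := fun x y hxy => by
    by_contra hne
    apply hgE x y hne
    have hxy' : p (g x) = p (g y) := hxy
    change (p (g x), p (g y)) ∈ E
    rw [hxy']
    exact hrefl _ (mem_range_self _)
  refine ⟨range (p ∘ g), range_comp_subset_range g p, perfect_range_s3 (hpc.comp hg) hinj,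
    range_nonempty _, ?_⟩
  rintro _ ⟨x, rfl⟩ _ ⟨y, rfl⟩ hne
  exact hgE x y fun h => hne (by rw [h])
end

section
/- Assume every 𝚫¹₂ subset of ℝ × ℝ is Lebesgue measurable. Then for every Borel set B ⊆ ℝ of positive Lebesgue measure and every equivalence relation E on B which is a 𝚫¹₂ subset of ℝ × ℝ and all of whose equivalence classes are Lebesgue null, there is a perfect set P ⊆ B of pairwise E-inequivalent elements. -/
/-!
The relation `E` is Lebesgue measurable by hypothesis, and all its sections are null, so `E` is a
null subset of the plane by Fubini. The rest is Mycielski's theorem: a null symmetric set `E` in the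
plane admits, inside any set of positive measure, a perfect set whose off-diagonal pairs avoid `E`.

For Mycielski's theorem, cover `E` by symmetric open sets `V n` of measure at most `8⁻ⁿ` and put
`H = {(x, y) | ∀ n, |x - y| > 2⁻ⁿ → (x, y) ∉ V n}`. This set is closed, symmetric, contains the
diagonal, and its off-diagonal part avoids `E` (`exists_closed_rel`). Moreover, inside the interval of
radius `2⁻ⁿ` about `x`, the section of `H` at `x` omits only points of the section of `⋃ k > n, V k`,
so by a Borel-Cantelli argument almost every `x` is a density point of its own section.

Write `D x y` for: `(x, y) ∈ H`, `x` is a density point of the section of `H` at `y`, and vice versa.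
By the Lebesgue density theorem, for almost every `x`, almost every `z` in the section of `H` at `x`
satisfies `D z x`. Hence a finite set of generic points that is a clique for `D` can be enlarged by a
new point arbitrarily close to any of its members `x`: finitely many conditions, each holding on a set
of density one at `x`, can be met simultaneously. Iterating gives a countable dense-in-itself clique,
and its closure is the required perfect set since `H` is closed.
-/

open MeasureTheory Set

/-- A set is 𝚺¹₂ if it is the projection of a coanalytic subset of `X × ℕ^ℕ`. -/
def Sigma12 {X : Type*} [TopologicalSpace X] (A : Set X) : Prop :=
  ∃ C : Set (X × (ℕ → ℕ)), AnalyticSet Cᶜ ∧ A = Prod.fst '' C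

/-- A set is 𝚫¹₂ if both it and its complement are 𝚺¹₂. -/
def Delta12 {X : Type*} [TopologicalSpace X] (A : Set X) : Prop :=
  Sigma12 A ∧ Sigma12 Aᶜ

open Filter Topology Metric

/-! ### The density filter -/

/-- The filter of sets having Lebesgue density one at `x`, where density is tested along the radii
`2⁻ⁿ`. Sets need not be measurable: it is the outer measure of the complement that must be small. -/
def densityFilter (x : ℝ) : Filter ℝ where
  sets := {S | Tendsto (fun n : ℕ => volume (Sᶜ ∩ closedBall x ((1 / 2 : ℝ) ^ n)) /
    volume (closedBall x ((1 / 2 : ℝ) ^ n))) atTop (𝓝 0)}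
  univ_sets := by simp
  sets_of_superset := by
    intro S T hS hST
    refine tendsto_of_tendsto_of_tendsto_of_le_of_le tendsto_const_nhds hS
      (fun _ => zero_le) (fun n => ?_)
    dsimp only
    gcongr
  inter_sets := by
    intro S T hS hT
    have h : Tendsto _ _ _ := Tendsto.add hS hT
    rw [add_zero] at h
    refine tendsto_of_tendsto_of_tendsto_of_le_of_le tendsto_const_nhds h
      (fun _ => zero_le) (fun n => ?_)
    dsimp only
    rw [compl_inter, union_inter_distrib_right, ← ENNReal.add_div]
    gcongr
    exact measure_union_le _ _

lemma mem_densityFilter {x : ℝ} {S : Set ℝ} : S ∈ densityFilter x ↔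
    Tendsto (fun n : ℕ => volume (Sᶜ ∩ closedBall x ((1 / 2 : ℝ) ^ n)) /
      volume (closedBall x ((1 / 2 : ℝ) ^ n))) atTop (𝓝 0) := Iff.rfl

lemma densityFilter_neBot (x : ℝ) : (densityFilter x).NeBot := by
  refine ⟨fun h => ?_⟩
  have h0 : (∅ : Set ℝ) ∈ densityFilter x := by rw [h]; trivial
  rw [mem_densityFilter] at h0
  have h1 : ∀ n : ℕ, volume (∅ᶜ ∩ closedBall x ((1 / 2 : ℝ) ^ n)) /
      volume (closedBall x ((1 / 2 : ℝ) ^ n)) = 1 := by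
    intro n
    rw [compl_empty, univ_inter]
    refine ENNReal.div_self ?_ ?_
    · rw [Real.volume_closedBall]; simp
    · exact measure_closedBall_lt_top.ne
  simp only [h1] at h0
  exact one_ne_zero (tendsto_nhds_unique tendsto_const_nhds h0)

lemma densityFilter_le_ae (x : ℝ) : densityFilter x ≤ ae volume := by
  intro S hS
  rw [mem_densityFilter]
  have h : ∀ n : ℕ, volume (Sᶜ ∩ closedBall x ((1 / 2 : ℝ) ^ n)) = 0 := fun n =>
    measure_mono_null inter_subset_left hS
  simp only [h, ENNReal.zero_div, tendsto_const_nhds]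

lemma ball_mem_densityFilter (x : ℝ) {ε : ℝ} (hε : 0 < ε) : ball x ε ∈ densityFilter x := by
  rw [mem_densityFilter]
  refine tendsto_const_nhds.congr' ?_
  have h : Tendsto (fun n : ℕ => (1 / 2 : ℝ) ^ n) atTop (𝓝 0) :=
    tendsto_pow_atTop_nhds_zero_of_lt_one (by norm_num) (by norm_num)
  filter_upwards [h.eventually_lt_const hε] with n hn
  have : (ball x ε)ᶜ ∩ closedBall x ((1 / 2 : ℝ) ^ n) = ∅ := by
    ext y
    simp only [mem_inter_iff, mem_compl_iff, mem_ball, mem_closedBall, mem_empty_iff_false, iff_false]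
    rintro ⟨h1, h2⟩
    exact h1 (h2.trans_lt hn)
  simp only [one_div, inv_pow] at this ⊢
  simp [this]

/-- Lebesgue density theorem. -/
lemma ae_mem_densityFilter {S : Set ℝ} (hS : MeasurableSet S) :
    ∀ᵐ x, x ∈ S → S ∈ densityFilter x := by
  filter_upwards [Besicovitch.ae_tendsto_measure_inter_div_of_measurableSet volume hS.compl]
    with x hx hxS
  rw [indicator_of_notMem (by simpa using hxS)] at hx
  rw [mem_densityFilter]
  refine hx.comp (tendsto_nhdsWithin_iff.2 ⟨?_, Eventually.of_forall fun n => ?_⟩)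
  · exact tendsto_pow_atTop_nhds_zero_of_lt_one (by norm_num) (by norm_num)
  · simp only [mem_Ioi]; positivity

/-- Being a density point of a section of a measurable planar set is a measurable condition. -/
lemma measurableSet_density {H : Set (ℝ × ℝ)} (hH : MeasurableSet H) :
    MeasurableSet {p : ℝ × ℝ | {w | (w, p.2) ∈ H} ∈ densityFilter p.1} := by
  simp only [mem_densityFilter]
  refine measurableSet_tendsto (𝓝 0) (fun n => ?_)
  simp only [Real.volume_closedBall]
  refine Measurable.div_const ?_ _
  have hs : MeasurableSet {q : (ℝ × ℝ) × ℝ |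
      (q.2, q.1.2) ∉ H ∧ dist q.2 q.1.1 ≤ (1 / 2 : ℝ) ^ n} := by
    refine MeasurableSet.inter ?_ ?_
    · exact (measurable_snd.prodMk (measurable_snd.comp measurable_fst)) hH.compl
    · exact measurableSet_le (f := fun q : (ℝ × ℝ) × ℝ => dist q.2 q.1.1) (by fun_prop)
        measurable_const
  exact measurable_measure_prodMk_left hs

/-! ### The closed relation -/

/-- A symmetric null set in the plane is avoided, off the diagonal, by a closed symmetric reflexive
relation almost all of whose sections have density one at their own base point. -/
lemma exists_closed_rel {E : Set (ℝ × ℝ)} (hE : volume E = 0)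
    (hsymm : ∀ x y, (x, y) ∈ E → (y, x) ∈ E) :
    ∃ H : Set (ℝ × ℝ), IsClosed H ∧ (∀ x, (x, x) ∈ H) ∧ (∀ x y, (x, y) ∈ H → (y, x) ∈ H) ∧
      (∀ x y, x ≠ y → (x, y) ∈ H → (x, y) ∉ E) ∧
      ∀ᵐ x, {w | (w, x) ∈ H} ∈ densityFilter x := by
  have hU : ∀ n : ℕ, ∃ U : Set (ℝ × ℝ), E ⊆ U ∧ IsOpen U ∧ volume U < (8⁻¹ : ENNReal) ^ n := by
    intro n
    refine Set.exists_isOpen_lt_of_lt E _ ?_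
    rw [hE]
    exact ENNReal.pow_pos (by simp) n
  choose U hEU hUo hUm using hU
  let V : ℕ → Set (ℝ × ℝ) := fun n => U n ∩ Prod.swap ⁻¹' U n
  have hVo : ∀ n, IsOpen (V n) := fun n => (hUo n).inter ((hUo n).preimage continuous_swap)
  have hEV : ∀ n, E ⊆ V n := fun n p hp => ⟨hEU n hp, hEU n (hsymm _ _ hp)⟩
  have hVm : ∀ n, volume (V n) ≤ (8⁻¹ : ENNReal) ^ n := fun n =>
    (measure_mono inter_subset_left).trans (hUm n).le
  have hVs : ∀ n x y, (x, y) ∈ V n → (y, x) ∈ V n := fun n x y h => ⟨h.2, h.1⟩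
  refine ⟨{p | ∀ n : ℕ, (1 / 2 : ℝ) ^ n < dist p.1 p.2 → p ∉ V n}, ?_, ?_, ?_, ?_, ?_⟩
  · simp only [ofPred_forall]
    refine isClosed_iInter fun n => ?_
    have : {p : ℝ × ℝ | (1 / 2 : ℝ) ^ n < dist p.1 p.2 → p ∉ V n} =
        {p : ℝ × ℝ | dist p.1 p.2 ≤ (1 / 2 : ℝ) ^ n} ∪ (V n)ᶜ := by
      ext p
      simp only [mem_ofPred_eq, mem_union, mem_compl_iff, ← not_lt]
      tauto
    simp only [imp_iff_not_or, not_lt] at this ⊢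
    rw [this]
    exact (isClosed_le (by fun_prop) (by fun_prop)).union (hVo n).isClosed_compl
  · intro x n h
    simp only [dist_self] at h
    exact absurd h (not_lt.2 (by positivity))
  · intro x y h n hn hV
    exact h n (by rwa [dist_comm] at hn) (hVs _ _ _ hV)
  · intro x y hxy h hE'
    obtain ⟨n, hn⟩ := exists_pow_lt_of_lt_one (dist_pos.2 hxy) (by norm_num : (1 / 2 : ℝ) < 1)
    exact h n hn (hEV n hE')
  · let f : ℕ → ℝ → ENNReal := fun n x => volume {w | (x, w) ∈ V n}
    have hf : ∀ n, Measurable (f n) := fun n => measurable_measure_prodMk_left (hVo n).measurableSet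
    have hfi : ∀ n, ∫⁻ x, f n x = volume (V n) := fun n =>
      (Measure.prod_apply (hVo n).measurableSet).symm
    have hint : ∫⁻ x, ∑' n, (4 : ENNReal) ^ n * f n x ≠ ⊤ := by
      rw [lintegral_tsum (fun n => ((hf n).const_mul _).aemeasurable)]
      have : ∀ n, ∫⁻ x, (4 : ENNReal) ^ n * f n x ≤ (2⁻¹ : ENNReal) ^ n := by
        intro n
        rw [lintegral_const_mul _ (hf n), hfi]
        refine (mul_le_mul_right (hVm n) _).trans (le_of_eq ?_)
        rw [← mul_pow]
        congr 1
        rw [show (8 : ENNReal) = 4 * 2 by norm_num, ENNReal.mul_inv (by simp) (by simp),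
          ← mul_assoc, ENNReal.mul_inv_cancel (by simp) (by simp), one_mul]
      refine ne_top_of_le_ne_top ?_ (ENNReal.tsum_le_tsum this)
      rw [ENNReal.tsum_geometric]
      simp
    have hmeas : Measurable fun x => ∑' n, (4 : ENNReal) ^ n * f n x :=
      Measurable.tsum fun n => (hf n).const_mul _
    filter_upwards [ae_lt_top hmeas hint] with x hx
    rw [mem_densityFilter]
    set C := ∑' n, (4 : ENNReal) ^ n * f n x with hC
    have hbound : ∀ n : ℕ, volume ({w | (w, x) ∈ {p : ℝ × ℝ | ∀ n : ℕ,
        (1 / 2 : ℝ) ^ n < dist p.1 p.2 → p ∉ V n}}ᶜ ∩ closedBall x ((1 / 2 : ℝ) ^ n)) /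
        volume (closedBall x ((1 / 2 : ℝ) ^ n)) ≤ (2⁻¹ : ENNReal) ^ n * C := by
      intro n
      have hsub : {w | (w, x) ∈ {p : ℝ × ℝ | ∀ n : ℕ,
          (1 / 2 : ℝ) ^ n < dist p.1 p.2 → p ∉ V n}}ᶜ ∩ closedBall x ((1 / 2 : ℝ) ^ n) ⊆
          ⋃ k : ℕ, {w | n ≤ k ∧ (x, w) ∈ V k} := by
        rintro w ⟨hw1, hw2⟩
        simp only [mem_compl_iff, mem_ofPred_eq, not_forall, not_not] at hw1
        obtain ⟨k, hk, hkV⟩ := hw1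
        refine mem_iUnion.2 ⟨k, ?_, hVs _ _ _ hkV⟩
        have h1 : (1 / 2 : ℝ) ^ k < (1 / 2 : ℝ) ^ n := hk.trans_le hw2
        exact ((pow_lt_pow_iff_right_of_lt_one₀ (by norm_num) (by norm_num)).1 h1).le
      have hle : (4 : ENNReal) ^ n * volume (⋃ k : ℕ, {w | n ≤ k ∧ (x, w) ∈ V k}) ≤ C := by
        refine (mul_le_mul_right (measure_iUnion_le _) _).trans ?_
        rw [← ENNReal.tsum_mul_left]
        refine ENNReal.tsum_le_tsum fun k => ?_
        by_cases hk : n ≤ k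
        · simp only [hk, true_and, f]
          gcongr
          norm_num
        · simp [hk]
      have hball : (2⁻¹ : ENNReal) ^ n ≤ volume (closedBall x ((1 / 2 : ℝ) ^ n)) := by
        rw [Real.volume_closedBall, show (2⁻¹ : ENNReal) = ENNReal.ofReal (1 / 2) by
          rw [one_div, ENNReal.ofReal_inv_of_pos (by norm_num)]; simp,
          ← ENNReal.ofReal_pow (by norm_num)]
        refine ENNReal.ofReal_le_ofReal ?_
        have : (0 : ℝ) < (1 / 2) ^ n := by positivity
        linarith
      calc _ ≤ volume (⋃ k : ℕ, {w | n ≤ k ∧ (x, w) ∈ V k}) / (2⁻¹ : ENNReal) ^ n := by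
            exact ENNReal.div_le_div (measure_mono hsub) hball
        _ = (2⁻¹ : ENNReal) ^ n * ((4 : ENNReal) ^ n *
              volume (⋃ k : ℕ, {w | n ≤ k ∧ (x, w) ∈ V k})) := by
            rw [div_eq_mul_inv, ENNReal.inv_pow, inv_inv, ← mul_assoc, ← mul_pow,
              show (4 : ENNReal) = 2 * 2 by norm_num, ← mul_assoc,
              ENNReal.inv_mul_cancel (by simp) (by simp), one_mul, mul_comm]
        _ ≤ _ := mul_le_mul_right hle _
    refine tendsto_of_tendsto_of_tendsto_of_le_of_le tendsto_const_nhds ?_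
      (fun _ => zero_le) hbound
    have := ENNReal.Tendsto.mul_const (b := C)
      (ENNReal.tendsto_pow_atTop_nhds_zero_of_lt_one (r := 2⁻¹) (by simp))
      (Or.inr hx.ne)
    simpa using this

/-! ### Dense-in-itself sets from finite approximations -/

/-- If every finite set with property `Q` can be enlarged, within `Q`, by a point close to any
prescribed member, then some nonempty dense-in-itself set has all its pairs contained in finite sets
with property `Q`. -/
lemma exists_preperfect {Q : Finset ℝ → Prop} {S₀ : Finset ℝ} (h0 : Q S₀) (hne : S₀.Nonempty)
    (step : ∀ S, Q S → ∀ x ∈ S, ∀ ε > 0, ∃ z, Q (insert z S) ∧ z ≠ x ∧ dist z x < ε) :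
    ∃ T : Set ℝ, T.Nonempty ∧ Preperfect T ∧
      ∀ x ∈ T, ∀ y ∈ T, ∃ S, Q S ∧ x ∈ S ∧ y ∈ S := by
  have multi : ∀ ε > 0, ∀ S, Q S → ∀ A ⊆ S, ∃ S', S ⊆ S' ∧ Q S' ∧
      ∀ x ∈ A, ∃ y ∈ S', y ≠ x ∧ dist y x < ε := by
    intro ε hε S hS A
    induction A using Finset.induction_on with
    | empty => exact fun _ => ⟨S, subset_rfl, hS, by simp⟩
    | insert a A _ ih =>
      intro hA
      obtain ⟨S', hSS', hQ, hy⟩ := ih ((Finset.subset_insert _ _).trans hA)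
      obtain ⟨z, hz, hza, hd⟩ := step S' hQ a (hSS' (hA (Finset.mem_insert_self _ _))) ε hε
      refine ⟨insert z S', hSS'.trans (Finset.subset_insert _ _), hz, fun x hx => ?_⟩
      rcases Finset.mem_insert.1 hx with rfl | hx
      · exact ⟨z, Finset.mem_insert_self _ _, hza, hd⟩
      · obtain ⟨y, hyS, h⟩ := hy x hx
        exact ⟨y, Finset.mem_insert_of_mem hyS, h⟩
  choose! g hg1 hg2 hg3 using
    fun (n : ℕ) (S : Finset ℝ) (hS : Q S) => multi (1 / (n + 1)) (by positivity) S hS S subset_rfl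
  let S : ℕ → Finset ℝ := fun n => Nat.rec S₀ (fun n S => g n S) n
  have hQ : ∀ n, Q (S n) := by
    intro n
    induction n with
    | zero => exact h0
    | succ n ih => exact hg2 n _ ih
  have hmono : Monotone S := monotone_nat_of_le_succ fun n => hg1 n _ (hQ n)
  refine ⟨⋃ n, {x | x ∈ S n}, ?_, ?_, ?_⟩
  · obtain ⟨x, hx⟩ := hne
    exact ⟨x, mem_iUnion.2 ⟨0, hx⟩⟩
  · rw [preperfect_iff_nhds]
    intro x hx W hW
    obtain ⟨n, hn⟩ := mem_iUnion.1 hx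
    obtain ⟨ε, hε, hεW⟩ := Metric.mem_nhds_iff.1 hW
    obtain ⟨m, hm⟩ := exists_nat_one_div_lt hε
    obtain ⟨y, hyS, hyx, hd⟩ := hg3 (max n m) _ (hQ _) x (hmono (le_max_left n m) hn)
    refine ⟨y, ⟨hεW (hd.trans (lt_of_le_of_lt ?_ hm)), mem_iUnion.2 ⟨max n m + 1, hyS⟩⟩, hyx⟩
    exact Nat.one_div_le_one_div (le_max_right _ _)
  · intro x hx y hy
    obtain ⟨n, hn⟩ := mem_iUnion.1 hx
    obtain ⟨m, hm⟩ := mem_iUnion.1 hy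
    exact ⟨S (max n m), hQ _, hmono (le_max_left n m) hn, hmono (le_max_right n m) hm⟩

/-! ### Mycielski's theorem -/

/-- Mycielski's theorem for a symmetric null relation in the plane. -/
lemma exists_perfect_of_null {E : Set (ℝ × ℝ)} (hE : volume E = 0)
    (hsymm : ∀ x y, (x, y) ∈ E → (y, x) ∈ E) {B : Set ℝ} (hB : MeasurableSet B)
    (hBpos : 0 < volume B) :
    ∃ P : Set ℝ, P ⊆ B ∧ Perfect P ∧ P.Nonempty ∧
      ∀ x ∈ P, ∀ y ∈ P, x ≠ y → (x, y) ∉ E := by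
  obtain ⟨K, hKB, hK, hKpos⟩ := hB.exists_lt_isCompact hBpos
  obtain ⟨H, hHc, hHr, hHs, hHE, hHd⟩ := exists_closed_rel hE hsymm
  let R : ℝ → ℝ → Prop := fun x y => {w | (w, y) ∈ H} ∈ densityFilter x
  let D : ℝ → ℝ → Prop := fun x y => (x, y) ∈ H ∧ R x y ∧ R y x
  have hRm : MeasurableSet {p : ℝ × ℝ | R p.1 p.2} := measurableSet_density hHc.measurableSet
  have hR1 : ∀ y, ∀ᵐ x, (x, y) ∈ H → R x y := fun y =>
    ae_mem_densityFilter (hHc.preimage (by fun_prop : Continuous fun w : ℝ => (w, y))).measurableSet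
  have hR2 : ∀ᵐ x, ∀ᵐ y, (x, y) ∈ H → R x y := by
    have hm : MeasurableSet {p : ℝ × ℝ | (p.1, p.2) ∈ H → R p.1 p.2} := by
      have : {p : ℝ × ℝ | (p.1, p.2) ∈ H → R p.1 p.2} = Hᶜ ∪ {p : ℝ × ℝ | R p.1 p.2} := by
        ext p
        simp only [mem_ofPred_eq, mem_union, mem_compl_iff]
        tauto
      rw [this]
      exact hHc.measurableSet.compl.union hRm
    rw [Measure.ae_ae_comm hm]
    exact Eventually.of_forall hR1
  -- The generic points: those from which a clique can be extended.
  let G : ℝ → Prop := fun x => x ∈ K ∧ K ∈ densityFilter x ∧ R x x ∧ ∀ᵐ z, (z, x) ∈ H → D z x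
  have hG : ∀ᵐ x, x ∈ K → G x := by
    filter_upwards [ae_mem_densityFilter hK.measurableSet, hHd, hR2] with x h1 h2 h3 hx
    refine ⟨hx, h1 hx, h2, ?_⟩
    filter_upwards [hR1 x, h3] with z h4 h5 hz
    exact ⟨hz, h4 hz, h5 (hHs _ _ hz)⟩
  obtain ⟨x₀, hx₀⟩ : ∃ x, G x := by
    by_contra! hcon
    refine hKpos.ne' (measure_mono_null (fun x hx => ?_) hG)
    exact fun h => hcon x (h hx)
  have hDs : ∀ x y, D x y → D y x := fun x y h => ⟨hHs _ _ h.1, h.2.2, h.2.1⟩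
  have hDr : ∀ x, G x → D x x := fun x h => ⟨hHr x, h.2.2.1, h.2.2.1⟩
  obtain ⟨T, hTne, hTp, hT⟩ := exists_preperfect
    (Q := fun S => (∀ x ∈ S, G x) ∧ ∀ x ∈ S, ∀ y ∈ S, D x y) (S₀ := {x₀})
    (by simpa using ⟨hx₀, hDr _ hx₀⟩) (by simp) (by
      rintro S ⟨hSG, hSD⟩ x hx ε hε
      have := densityFilter_neBot x
      have e1 : ∀ᶠ z in densityFilter x, G z := by
        filter_upwards [(hSG x hx).2.1, densityFilter_le_ae x hG] with z h1 h2 using h2 h1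
      have e2 : ∀ᶠ z in densityFilter x, ∀ y ∈ S, D z y := by
        rw [eventually_all_finset]
        intro y hy
        filter_upwards [(hSD x hx y hy).2.1, densityFilter_le_ae x (hSG y hy).2.2.2] with z h1 h2
          using h2 h1
      have e3 : ∀ᶠ z in densityFilter x, z ≠ x :=
        densityFilter_le_ae x (compl_mem_ae_iff.2 (measure_singleton x))
      obtain ⟨z, hzG, hzD, hzx, hzε⟩ :=
        (e1.and (e2.and (e3.and (ball_mem_densityFilter x hε)))).exists
      refine ⟨z, ⟨?_, ?_⟩, hzx, hzε⟩
      · intro y hy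
        rcases Finset.mem_insert.1 hy with rfl | hy
        exacts [hzG, hSG y hy]
      · intro u hu v hv
        rcases Finset.mem_insert.1 hu with hu' | hu' <;>
          rcases Finset.mem_insert.1 hv with hv' | hv'
        · rw [hu', hv']; exact hDr _ hzG
        · rw [hu']; exact hzD v hv'
        · rw [hv']; exact hDs _ _ (hzD u hu')
        · exact hSD u hu' v hv')
  have hTK : closure T ⊆ K := by
    refine closure_minimal (fun x hx => ?_) hK.isClosed
    obtain ⟨S, hS, hxS, -⟩ := hT x hx x hx
    exact (hS.1 x hxS).1
  have hTH : closure T ×ˢ closure T ⊆ H := by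
    rw [← closure_prod_eq]
    refine closure_minimal ?_ hHc
    rintro ⟨x, y⟩ ⟨hx, hy⟩
    obtain ⟨S, hS, hxS, hyS⟩ := hT x hx y hy
    exact (hS.2 x hxS y hyS).1
  exact ⟨closure T, hTK.trans hKB, hTp.perfect_closure, hTne.closure,
    fun x hx y hy hxy => hHE x y hxy (hTH ⟨hx, hy⟩)⟩

/-- Fubini for null-measurable planar sets with null sections. -/
lemma volume_eq_zero_of_sections {E : Set (ℝ × ℝ)} (hE : NullMeasurableSet E volume)
    (h : ∀ x, volume {y | (x, y) ∈ E} = 0) : volume E = 0 := by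
  obtain ⟨t, htE, ht, hae⟩ := hE.exists_measurable_subset_ae_eq
  rw [← measure_congr hae, Measure.volume_eq_prod, Measure.measure_prod_null ht]
  exact Eventually.of_forall fun x => measure_mono_null (fun y hy => htE hy) (h x)

theorem psp_null_delta12
    (hmeas : ∀ A : Set (ℝ × ℝ), Delta12 A → NullMeasurableSet A (volume : Measure (ℝ × ℝ))) :
    ∀ B : Set ℝ, MeasurableSet B → 0 < volume B →
      ∀ E : Set (ℝ × ℝ), IsEquivOn B E → Delta12 E →
        (∀ x ∈ B, volume {y | (x, y) ∈ E} = 0) →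
        ∃ P : Set ℝ, P ⊆ B ∧ Perfect P ∧ P.Nonempty ∧
          ∀ x ∈ P, ∀ y ∈ P, x ≠ y → (x, y) ∉ E := by
  intro B hB hBpos E hEq hED hnull
  refine exists_perfect_of_null (volume_eq_zero_of_sections (hmeas E hED) fun x => ?_)
    hEq.2.2.1 hB hBpos
  by_cases hx : x ∈ B
  · exact hnull x hx
  · have : {y | (x, y) ∈ E} = ∅ := by
      ext y
      simpa using fun h => hx (hEq.1 h).1
    rw [this, measure_empty]
end

section
/- Let I be a ccc, Borel generated σ-ideal on a Polish space X. Then a set A ⊆ X is I-measurable if and only if there is a Borel set B ⊆ X such that the symmetric difference A △ B belongs to I. -/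
/-!
For the forward direction, take a maximal disjoint family of Borel `I`-positive sets each
contained in `A` or in `Aᶜ` (Zorn). By ccc it is countable, so its union is Borel, and
`I`-measurability of `A` together with maximality shows that the complement of this union is
`I`-small. The union `B` of the members contained in `A` then differs from `A` only within that
complement.

Conversely, cover `A ∆ B` by a Borel set `N ∈ I`. Outside `N` the sets `A` and `B` agree, so a Borel
`I`-positive `D` is split by `B` into the Borel pieces `(D \ N) ∩ B ⊆ A` and `(D \ N) \ B ⊆ Aᶜ`,
at least one of which is positive.
-/

open MeasureTheory Set

/-- `I` is ccc: every antichain of Borel `I`-positive sets (pairwise having no common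
Borel `I`-positive subset) is countable. -/
def IsCCCIdeal {X : Type*} [MeasurableSpace X] (I : Set (Set X)) : Prop :=
  ∀ 𝒜 : Set (Set X), (∀ A ∈ 𝒜, MeasurableSet A ∧ A ∉ I) →
    (∀ A ∈ 𝒜, ∀ B ∈ 𝒜, A ≠ B →
      ¬ ∃ C : Set X, MeasurableSet C ∧ C ∉ I ∧ C ⊆ A ∩ B) →
    𝒜.Countable

/-- `A` is `I`-measurable: every Borel `I`-positive set has a Borel `I`-positive subset
contained in `A` or in its complement. -/
def IMeasurable {X : Type*} [MeasurableSpace X] (I : Set (Set X)) (A : Set X) : Prop :=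
  ∀ B : Set X, MeasurableSet B → B ∉ I →
    ∃ B' : Set X, MeasurableSet B' ∧ B' ∉ I ∧ B' ⊆ B ∧ (B' ⊆ A ∨ B' ⊆ Aᶜ)

lemma IsSigmaIdeal.union_mem {X : Type*} {I : Set (Set X)} (hI : IsSigmaIdeal I) {s t : Set X}
    (hs : s ∈ I) (ht : t ∈ I) : s ∪ t ∈ I := by
  refine hI.2.1 _ _ ?_ (hI.2.2 (fun n => if n = 0 then s else t) ?_)
  · rintro x (hx | hx)
    · exact mem_iUnion.2 ⟨0, by simpa using hx⟩
    · exact mem_iUnion.2 ⟨1, by simpa using hx⟩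
  · intro n
    split_ifs <;> assumption

/-- In a ccc σ-ideal, if the positive sets satisfying `P` are dense below every Borel positive set,
then countably many Borel sets satisfying `P` cover `X` up to a set in `I`. -/
lemma IsCCCIdeal.exists_countable_cover {X : Type*} [MeasurableSpace X] {I : Set (Set X)}
    (hI : IsSigmaIdeal I) (hccc : IsCCCIdeal I) {P : Set X → Prop}
    (hP : ∀ B : Set X, MeasurableSet B → B ∉ I →
      ∃ B' : Set X, MeasurableSet B' ∧ B' ∉ I ∧ B' ⊆ B ∧ P B') :
    ∃ 𝒜 : Set (Set X), 𝒜.Countable ∧ (∀ s ∈ 𝒜, MeasurableSet s ∧ P s) ∧ (⋃₀ 𝒜)ᶜ ∈ I := by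
  obtain ⟨𝒜, h𝒜⟩ := zorn_subset
    {𝒜 : Set (Set X) | (∀ s ∈ 𝒜, MeasurableSet s ∧ s ∉ I ∧ P s) ∧ 𝒜.PairwiseDisjoint id} (by
      intro c hc hchain
      refine ⟨⋃₀ c, ⟨?_, ?_⟩, fun s hs => subset_sUnion_of_mem hs⟩
      · rintro s ⟨t, ht, hst⟩
        exact (hc ht).1 s hst
      · exact (pairwiseDisjoint_sUnion hchain.directedOn).2 fun t ht => (hc ht).2)
  obtain ⟨hgood, hdisj⟩ := h𝒜.prop
  have hcount : 𝒜.Countable := by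
    refine hccc 𝒜 (fun s hs => ⟨(hgood s hs).1, (hgood s hs).2.1⟩) ?_
    rintro s hs t ht hst ⟨C, -, hC, hCst⟩
    exact hC (hI.2.1 _ _ (hCst.trans (hdisj hs ht hst).le_bot) hI.1)
  refine ⟨𝒜, hcount, fun s hs => ⟨(hgood s hs).1, (hgood s hs).2.2⟩, ?_⟩
  by_contra hpos
  obtain ⟨B', hB'm, hB'I, hB'sub, hB'P⟩ :=
    hP _ (MeasurableSet.sUnion hcount fun s hs => (hgood s hs).1).compl hpos
  have hB'disj : ∀ s ∈ 𝒜, Disjoint B' s := fun s hs =>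
    (disjoint_compl_left.mono_left hB'sub).mono_right (subset_sUnion_of_mem hs)
  have hmem : B' ∈ 𝒜 := by
    refine h𝒜.mem_of_prop_insert ⟨?_, hdisj.insert fun s hs _ => hB'disj s hs⟩
    rintro s (rfl | hs)
    · exact ⟨hB'm, hB'I, hB'P⟩
    · exact hgood s hs
  -- `B'` is disjoint from itself, hence empty, although it is positive.
  have hempty : B' = ∅ := disjoint_self.1 (hB'disj B' hmem)
  exact hB'I (hempty ▸ hI.1)

theorem iMeasurable_iff_borel_approx {X : Type*} [TopologicalSpace X] [PolishSpace X]
    [MeasurableSpace X] [BorelSpace X]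
    (I : Set (Set X)) (hI : IsSigmaIdeal I) (hccc : IsCCCIdeal I)
    (hbg : ∀ s ∈ I, ∃ t : Set X, MeasurableSet t ∧ t ∈ I ∧ s ⊆ t)
    (A : Set X) :
    IMeasurable I A ↔ ∃ B : Set X, MeasurableSet B ∧ symmDiff A B ∈ I := by
  constructor
  · intro hA
    obtain ⟨𝒜, hcount, h𝒜, hcover⟩ := hccc.exists_countable_cover hI hA
    refine ⟨⋃₀ {s ∈ 𝒜 | s ⊆ A}, MeasurableSet.sUnion (hcount.mono (sep_subset _ _))
      fun s hs => (h𝒜 s hs.1).1, hI.2.1 _ _ ?_ hcover⟩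
    rintro x (⟨hxA, hxB⟩ | ⟨⟨s, ⟨-, hsA⟩, hxs⟩, hxA⟩)
    · rintro ⟨s, hs, hxs⟩
      rcases (h𝒜 s hs).2 with hsA | hsA
      · exact hxB ⟨s, ⟨hs, hsA⟩, hxs⟩
      · exact hsA hxs hxA
    · exact absurd (hsA hxs) hxA
  · rintro ⟨B, hB, hAB⟩ D hD hDI
    obtain ⟨N, hN, hNI, hsub⟩ := hbg _ hAB
    by_cases h : (D \ N) ∩ B ∈ I
    · refine ⟨(D \ N) \ B, (hD.diff hN).diff hB, fun h' => hDI ?_,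
        sdiff_subset.trans sdiff_subset, Or.inr ?_⟩
      · refine hI.2.1 _ _ ?_ (hI.union_mem hNI (hI.union_mem h h'))
        rw [inter_union_sdiff, union_sdiff_self]
        exact subset_union_right
      · exact fun x hx hxA => hx.1.2 (hsub (Or.inl ⟨hxA, hx.2⟩))
    · refine ⟨(D \ N) ∩ B, (hD.diff hN).inter hB, h,
        inter_subset_left.trans sdiff_subset, Or.inl fun x hx => ?_⟩
      by_contra hxA
      exact hx.1.2 (hsub (Or.inr ⟨hx.2, hxA⟩))
end
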